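/- arXiv:2203.02976 — 4 statements merged into one kernel-verified Lean document; each statement's English description precedes it below -/
import Mathlib

section
/- Let k be a field, m ≥ 1, and let A = k[X₁^{±1}, …, X_{m+1}^{±1}][Y] be the polynomial ring in one variable Y over the Laurent polynomial ring in m+1 variables over k. Let 𝔞 ⊆ A be an ideal generated by m elements such that the Krull dimension of A/((Y) + 𝔞) equals 1. Then 𝔞 equals its saturation 𝔞 : Y^∞ with respect to Y; equivalently, the image of Y in A/𝔞 is a nonzerodivisor. -/
open Polynomial

noncomputable section

/-- The ring `A = k[X₁^{±1}, …, X_{m+1}^{±1}][Y]`: the polynomial ring in one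
variable `Y` over the ring of Laurent polynomials in `m + 1` variables over
`k` (the latter realised as the monoid algebra of `ℤ^{m+1}`). -/
abbrev LaurentPolyRing (k : Type) [Field k] (m : ℕ) : Type :=
  Polynomial (AddMonoidAlgebra k (Fin (m + 1) → ℤ))


open RingTheory.Sequence IsLocalRing CategoryTheory Abelian Pointwise in
lemma aux_exists_ass {R M : Type} [CommRing R] [IsLocalRing R] [IsNoetherianRing R]
    [AddCommGroup M] [Module R M] [Module.Finite R M] (p : Ideal R)
    (hp : p ∈ associatedPrimes R M) (x : R) (hx : x ∈ maximalIdeal R)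
    (hreg : IsSMulRegular M x) :
    ∃ q ∈ associatedPrimes R (QuotSMulTop x M), p ≤ q ∧ x ∈ q := by
  obtain ⟨hpp, y, hy⟩ := isAssociatedPrime_iff.mp hp
  let N : Submodule R M := Submodule.torsionBySet R M (p : Set R)
  have hyN : y ∈ N := by
    rw [Submodule.mem_torsionBySet_iff]
    rintro ⟨a, ha⟩
    have : a ∈ (⊥ : Submodule R M).colon {y} := hy ▸ ha
    simpa [Submodule.mem_colon_singleton] using this
  have hy0 : y ≠ 0 := by
    rintro rfl
    apply hpp.ne_top
    rw [hy, Ideal.eq_top_iff_one]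
    simp [Submodule.mem_colon_singleton]
  have hNx : ¬ N ≤ x • (⊤ : Submodule R M) := by
    intro h
    have h2 : N ≤ maximalIdeal R • N := by
      intro z hz
      obtain ⟨w, -, hw⟩ := (Submodule.mem_smul_pointwise_iff_exists _ _ _).mp (h hz)
      have hwN : w ∈ N := by
        rw [Submodule.mem_torsionBySet_iff] at hz ⊢
        intro a
        apply hreg
        have := hz a
        rw [← hw, smul_comm] at this
        simpa using this
      rw [← hw]
      exact Submodule.smul_mem_smul hx hwN
    have := Submodule.eq_bot_of_le_smul_of_le_jacobson_bot (maximalIdeal R) N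
      (IsNoetherian.noetherian N) h2 (IsLocalRing.maximalIdeal_le_jacobson _)
    rw [this] at hyN
    exact hy0 (by simpa using hyN)
  obtain ⟨z, hzN, hzx⟩ := Set.not_subset.mp hNx
  let z' : QuotSMulTop x M := Submodule.Quotient.mk z
  have hz' : z' ≠ 0 := by
    intro h
    exact hzx ((Submodule.Quotient.mk_eq_zero _).mp h)
  obtain ⟨q, hq, hle⟩ := exists_le_isAssociatedPrime_of_isNoetherianRing R z' hz'
  refine ⟨q, hq, fun a ha => hle ?_, hle ?_⟩
  · rw [Submodule.mem_colon_singleton]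
    have : a • z = 0 := (Submodule.mem_torsionBySet_iff _ _).mp hzN ⟨a, ha⟩
    have h3 : a • z' = Submodule.Quotient.mk (a • z) := rfl
    rw [h3, this]; simp
  · rw [Submodule.mem_colon_singleton]
    have h3 : x • z' = Submodule.Quotient.mk (x • z) := rfl
    rw [h3, Submodule.mem_bot, Submodule.Quotient.mk_eq_zero]
    exact Submodule.smul_mem_pointwise_smul _ _ _ trivial

open RingTheory.Sequence IsLocalRing in
lemma aux_length_le_coheight {R : Type} [CommRing R] [IsLocalRing R] [IsNoetherianRing R]
    (rs : List R) : ∀ (M : Type) [AddCommGroup M] [Module R M] [Module.Finite R M]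
    (p : PrimeSpectrum R)
    (_ : p.asIdeal ∈ associatedPrimes R M) (_ : ∀ r ∈ rs, r ∈ maximalIdeal R)
    (_ : IsWeaklyRegular M rs), (rs.length : ℕ∞) ≤ Order.coheight p := by
  induction rs with
  | nil => intros; simp
  | cons r rs ih =>
    intro M _ _ _ p hp hmem hreg
    rw [isWeaklyRegular_cons_iff] at hreg
    obtain ⟨q, hq, hpq, hrq⟩ := aux_exists_ass p.asIdeal hp r (hmem r (by simp)) hreg.1
    have h1 := ih _ ⟨q, hq.isPrime⟩ hq (fun r hr => hmem r (by simp [hr])) hreg.2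
    have hlt : p < ⟨q, hq.isPrime⟩ := by
      refine lt_of_le_of_ne hpq ?_
      rintro rfl
      have : r ∈ ⋃ p ∈ associatedPrimes R M, (p : Set R) := Set.mem_biUnion hp hrq
      rw [biUnion_associatedPrimes_eq_compl_regular] at this
      exact this hreg.1
    refine le_trans ?_ (Order.coheight_add_one_le hlt)
    simpa using h1

lemma aux_coheight_le_supportDim {R M : Type} [CommRing R]
    [AddCommGroup M] [Module R M] [Module.Finite R M] (p : PrimeSpectrum R)
    (hp : p ∈ Module.support R M) : (Order.coheight p : WithBot ℕ∞) ≤ Module.supportDim R M := by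
  rw [Order.coheight_eq_krullDim_Ici]
  exact Order.krullDim_le_of_strictMono
    (fun a : Set.Ici p => (⟨a.1, Module.mem_support_mono a.2 hp⟩ : Module.support R M))
    (fun _ _ h => h)

open RingTheory.Sequence IsLocalRing CategoryTheory Abelian Pointwise in
lemma aux_exchange {R M : Type} [CommRing R] [IsLocalRing R] [IsNoetherianRing R]
    [AddCommGroup M] [Module R M] [Module.Finite R M] [Nontrivial M] (n : ℕ)
    (h : ∃ rs : List R, rs.length = n + 1 ∧ (∀ r ∈ rs, r ∈ maximalIdeal R) ∧ IsRegular M rs)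
    (x : R) (hx : x ∈ maximalIdeal R) (hreg : IsSMulRegular M x) :
    ∃ rs : List R, rs.length = n ∧ (∀ r ∈ rs, r ∈ maximalIdeal R) ∧
      IsRegular (QuotSMulTop x M) rs := by
  have ntq : Nontrivial (QuotSMulTop x M) := nontrivial_quotSMulTop_of_mem_maximalIdeal _ hx
  have lt1 : ∀ (N : Type) [AddCommGroup N] [Module R N] [Module.Finite R N] [Nontrivial N],
      maximalIdeal R • (⊤ : Submodule R N) < ⊤ := fun N _ _ _ _ =>
    (Submodule.top_ne_ideal_smul_of_le_jacobson_annihilator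
      (IsLocalRing.maximalIdeal_le_jacobson _)).symm.lt_top
  have h2 := ((ModuleCat.exists_isRegular_tfae (maximalIdeal R) (n+1) (ModuleCat.of R M)
    (lt1 M)).out 3 1).mp h
  refine ((ModuleCat.exists_isRegular_tfae (maximalIdeal R) n
    (ModuleCat.of R (QuotSMulTop x M)) (lt1 _)).out 1 3).mp ?_
  intro i hi
  have zero1 := AddCommGrpCat.isZero_of_iff_subsingleton.mpr (h2 i (by omega))
  have zero2 := AddCommGrpCat.isZero_of_iff_subsingleton.mpr (h2 (i + 1) (by omega))
  have hreg' : IsSMulRegular (ModuleCat.of R M) x := hreg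
  exact AddCommGrpCat.subsingleton_of_isZero <| ShortComplex.Exact.isZero_of_both_zeros
    ((Ext.covariant_sequence_exact₃' _ hreg'.smulShortComplex_shortExact) i (i + 1) rfl)
    (zero1.eq_zero_of_src _) (zero2.eq_zero_of_tgt _)

open RingTheory.Sequence IsLocalRing in
lemma aux_dim {R : Type} [CommRing R] [IsLocalRing R] [IsNoetherianRing R]
    (rs : List R) (hmem : ∀ r ∈ rs, r ∈ maximalIdeal R) :
    ∀ (M : Type) [AddCommGroup M] [Module R M] [Module.Finite R M],
    Module.supportDim R M ≤
      Module.supportDim R (M ⧸ Ideal.ofList rs • (⊤ : Submodule R M)) + rs.length := by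
  induction rs with
  | nil =>
    intro M _ _ _
    rw [Ideal.ofList_nil, Submodule.bot_smul]
    simpa using (Module.supportDim_eq_of_equiv (Submodule.quotEquivOfEqBot (⊥ : Submodule R M) rfl)).ge
  | cons x rs ih =>
    intro M _ _ _
    rw [Module.supportDim_eq_of_equiv
      (Submodule.quotOfListConsSMulTopEquivQuotSMulTopInner M x _)]
    refine (Module.supportDim_le_supportDim_quotSMulTop_succ (hmem x (by simp))).trans ?_
    have := ih (fun r hr => hmem r (by simp [hr])) (QuotSMulTop x M)
    rw [List.length_cons, Nat.cast_add, ← add_assoc]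
    simpa using add_le_add_left this 1

open RingTheory.Sequence IsLocalRing in
lemma aux_main {R : Type} [CommRing R] [IsLocalRing R] [IsNoetherianRing R]
    (rs : List R) (hmem : ∀ r ∈ rs, r ∈ maximalIdeal R) :
    ∀ (n : ℕ) (M : Type) [AddCommGroup M] [Module R M] [Module.Finite R M]
    (_ : ∃ ys : List R, ys.length = n ∧ (∀ r ∈ ys, r ∈ maximalIdeal R) ∧ IsRegular M ys)
    (_ : Module.supportDim R (M ⧸ Ideal.ofList rs • (⊤ : Submodule R M)) + rs.length ≤ n),
    IsWeaklyRegular M rs := by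
  induction rs with
  | nil => intros; exact .nil R _
  | cons x rs ih =>
    intro n M _ _ _ hdepth hdim
    obtain ⟨ys, hlen, hys, hyreg⟩ := id hdepth
    have ntM : Nontrivial M := hyreg.nontrivial
    have hx := hmem x (by simp)
    have hmem' : ∀ r ∈ rs, r ∈ maximalIdeal R := fun r hr => hmem r (by simp [hr])
    have ntq : Nontrivial (QuotSMulTop x M) := nontrivial_quotSMulTop_of_mem_maximalIdeal _ hx
    rw [Module.supportDim_eq_of_equiv
      (Submodule.quotOfListConsSMulTopEquivQuotSMulTopInner M x _)] at hdim
    have h1 := aux_dim rs hmem' (QuotSMulTop x M)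
    rw [List.length_cons, Nat.cast_add, ← add_assoc] at hdim
    have h2 : Module.supportDim R (QuotSMulTop x M) + 1 ≤ n :=
      le_trans (by simpa using add_le_add_left h1 1) hdim
    have hnb := Module.supportDim_ne_bot_of_nontrivial R (QuotSMulTop x M)
    obtain ⟨d, hd⟩ := WithBot.ne_bot_iff_exists.mp hnb
    rw [← hd] at h2
    have h2' : d + 1 ≤ n := by exact_mod_cast h2
    have hreg : IsSMulRegular M x := by
      by_contra hcon
      have : x ∈ ⋃ p ∈ associatedPrimes R M, (p : Set R) := by
        rw [biUnion_associatedPrimes_eq_compl_regular]; exact hcon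
      simp only [Set.mem_iUnion] at this
      obtain ⟨p, hp, hxp⟩ := this
      have hpp := hp.isPrime
      have h3 := aux_length_le_coheight ys M ⟨p, hpp⟩ hp hys hyreg.toIsWeaklyRegular
      have h4 := aux_coheight_le_supportDim (M := QuotSMulTop x M) ⟨p, hpp⟩ (by
        rw [Module.support_quotSMulTop]
        refine ⟨?_, by simpa using hxp⟩
        rw [Module.mem_support_iff_of_finite]
        simpa [Submodule.annihilator_top] using hp.annihilator_le)
      rw [← hd] at h4
      have h4' : Order.coheight (⟨p, hpp⟩ : PrimeSpectrum R) ≤ d := by exact_mod_cast h4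
      rw [hlen] at h3
      have h5 : d + 1 ≤ d := h2'.trans (h3.trans h4')
      have h6 : d < ⊤ := lt_of_lt_of_le (by
        rcases eq_or_ne d ⊤ with rfl | h
        · simp at h2'
        · exact h.lt_top) le_rfl
      exact absurd h5 (not_le.mpr (ENat.lt_add_one_iff h6.ne |>.mpr le_rfl))
    obtain ⟨n, rfl⟩ : ∃ n', n = n' + 1 := by
      refine ⟨n - 1, ?_⟩
      have : (1 : ℕ∞) ≤ n := le_trans (by simp) h2'
      have : 1 ≤ n := by exact_mod_cast this
      omega
    refine (isWeaklyRegular_cons_iff _ _ _).mpr ⟨hreg, ih hmem' n _ (aux_exchange n hdepth x hx hreg) ?_⟩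
    have h7 : (Module.supportDim R (QuotSMulTop x M ⧸ Ideal.ofList rs •
      (⊤ : Submodule R (QuotSMulTop x M))) + rs.length) + 1 ≤ (n : WithBot ℕ∞) + 1 := by
      simpa using hdim
    generalize (Module.supportDim R (QuotSMulTop x M ⧸ Ideal.ofList rs •
      (⊤ : Submodule R (QuotSMulTop x M))) + rs.length) = e at h7
    induction e with
    | bot => exact bot_le
    | coe e =>
      have : e + 1 ≤ (n : ℕ∞) + 1 := by exact_mod_cast h7
      have := (ENat.add_le_add_iff_right (by simp)).mp this
      exact_mod_cast this

/-- every maximal ideal contains a weakly regular sequence of length `n` -/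
def DepthGE (B : Type) [CommRing B] (n : ℕ) : Prop :=
  ∀ P : Ideal B, P.IsMaximal → ∃ rs : List B, rs.length = n ∧ (∀ r ∈ rs, r ∈ P) ∧
    RingTheory.Sequence.IsWeaklyRegular B rs

open RingTheory.Sequence in
lemma DepthGE.polynomial {B : Type} [CommRing B] [IsJacobsonRing B] {n : ℕ}
    (h : DepthGE B n) : DepthGE B[X] (n + 1) := by
  intro P hP
  obtain ⟨rs, hlen, hmem, hreg⟩ := h (P.comap C) (isMaximal_comap_C_of_isJacobsonRing P)
  obtain ⟨f, hf, hf0⟩ := quotient_mk_comp_C_isIntegral_of_isJacobsonRing P (Ideal.Quotient.mk P X)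
  have hfP : f ∈ P := by
    rw [← Ideal.Quotient.eq_zero_iff_mem, ← hf0, ← Polynomial.hom_eval₂]
    simp
  refine ⟨rs.map (algebraMap B B[X]) ++ [f], by simp [hlen], ?_, ?_⟩
  · intro r hr
    rcases List.mem_append.mp hr with hr | hr
    · obtain ⟨s, hs, rfl⟩ := List.mem_map.mp hr
      exact hmem s hs
    · simp only [List.mem_singleton] at hr
      exact hr ▸ hfP
  · rw [isWeaklyRegular_append_iff, isWeaklyRegular_singleton_iff]
    refine ⟨hreg.of_flat, ?_⟩
    rw [isSMulRegular_quotient_iff_mem_of_smul_mem]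
    intro g hg
    rw [smul_eq_mul, Ideal.mul_top, ← Ideal.map_ofList, Polynomial.algebraMap_eq] at *
    have key : ∀ q : B[X], q ∈ (Ideal.ofList rs).map C ↔
        q.map (Ideal.Quotient.mk (Ideal.ofList rs)) = 0 := by
      intro q
      rw [Ideal.mem_map_C_iff, Polynomial.ext_iff]
      simp [Ideal.Quotient.eq_zero_iff_mem]
    rw [key] at hg ⊢
    rw [smul_eq_mul, Polynomial.map_mul] at hg
    exact ((hf.map _).mul_right_eq_zero_iff).mp hg

open RingTheory.Sequence in
lemma DepthGE.laurent {B : Type} [CommRing B] [IsJacobsonRing B] {n : ℕ}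
    (h : DepthGE B n) : DepthGE (LaurentPolynomial B) (n + 1) := by
  intro P hP
  have hm := ((IsLocalization.isMaximal_iff_isMaximal_disjoint (R := B[X])
    (LaurentPolynomial B) X P).mp hP).1
  obtain ⟨rs, hlen, hmem, hreg⟩ := h.polynomial _ hm
  refine ⟨rs.map (algebraMap _ _), by simp [hlen], ?_,
    hreg.of_isLocalization _ (Submonoid.powers (X : B[X]))⟩
  intro r hr
  obtain ⟨s, hs, rfl⟩ := List.mem_map.mp hr
  exact hmem s hs

open RingTheory.Sequence in
lemma DepthGE.of_equiv {B B' : Type} [CommRing B] [CommRing B'] {n : ℕ} (e : B ≃+* B')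
    (h : DepthGE B n) : DepthGE B' n := by
  intro P hP
  obtain ⟨rs, hlen, hmem, hreg⟩ := h (P.comap e) (Ideal.comap_isMaximal_of_equiv e)
  let _ := e.toRingHom.toAlgebra
  have : Module.Flat B B' := Module.Flat.of_linearEquiv
    (R := B) (M := B) (N := B') (AddEquiv.toLinearEquiv e.symm.toAddEquiv (fun a b => by
      apply e.injective
      simp [Algebra.smul_def, RingHom.algebraMap_toAlgebra]))
  refine ⟨rs.map (algebraMap _ _), by simp [hlen], ?_, hreg.of_flat⟩
  intro r hr
  obtain ⟨s, hs, rfl⟩ := List.mem_map.mp hr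
  exact hmem s hs

lemma aux_jac (k : Type) [Field k] (n : ℕ) : IsJacobsonRing (AddMonoidAlgebra k (Fin n → ℤ)) :=
  isJacobsonRing_of_finiteType (A := k)

lemma aux_noeth (k : Type) [Field k] (n : ℕ) : IsNoetherianRing (AddMonoidAlgebra k (Fin n → ℤ)) :=
  Algebra.FiniteType.isNoetherianRing k _

lemma aux_depth (k : Type) [Field k] (n : ℕ) : DepthGE (AddMonoidAlgebra k (Fin n → ℤ)) n := by
  induction n with
  | zero => exact fun P hP => ⟨[], rfl, by simp, .nil _ _⟩
  | succ n ih =>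
    have := aux_jac k n
    let e0 : (Fin (n+1) → ℤ) ≃+ ℤ × (Fin n → ℤ) :=
      { Fin.consEquiv (fun _ => ℤ) |>.symm with map_add' := fun a b => rfl }
    refine ih.laurent.of_equiv ?_
    exact ((AddMonoidAlgebra.mapDomainRingEquiv k e0).trans AddMonoidAlgebra.curryRingEquiv).symm

lemma aux_loc_dim {A : Type} [CommRing A] (I P : Ideal A) [P.IsPrime] :
    ringKrullDim (Localization.AtPrime P ⧸ I.map (algebraMap A (Localization.AtPrime P))) ≤
      ringKrullDim (A ⧸ I) := by
  rw [ringKrullDim_quotient, ringKrullDim_quotient]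
  have hmono : StrictMono (PrimeSpectrum.comap (algebraMap A (Localization.AtPrime P))) :=
    Monotone.strictMono_of_injective (fun a b h => Ideal.comap_mono h)
      (PrimeSpectrum.localization_comap_injective _ P.primeCompl)
  refine Order.krullDim_le_of_strictMono
    (fun q => ⟨PrimeSpectrum.comap (algebraMap A (Localization.AtPrime P)) q.1, ?_⟩) ?_
  · have := q.2
    rw [PrimeSpectrum.mem_zeroLocus, SetLike.coe_subset_coe] at this ⊢
    exact Ideal.map_le_iff_le_comap.mp this
  · intro a b h
    exact hmono h

/-- **Proposition 4.7 (key commutative-algebra step)** of the paper.  Let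
`A = k[X₁^{±1}, …, X_{m+1}^{±1}][Y]` and let `𝔞 ⊆ A` be an ideal generated by
`m` elements such that the Krull dimension of `A/((Y) + 𝔞)` equals `1`.  Then
`𝔞` equals its saturation `𝔞 : Y^∞` with respect to `Y`; equivalently, the
image of `Y` in `A/𝔞` is a nonzerodivisor. -/
theorem ideal_eq_saturation_of_dim_one
    (k : Type) [Field k] (m : ℕ) (hm : 1 ≤ m)
    (𝔞 : Ideal (LaurentPolyRing k m))
    (gens : Finset (LaurentPolyRing k m))
    (hcard : gens.card = m)
    (hspan : Ideal.span (gens : Set (LaurentPolyRing k m)) = 𝔞)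
    (hdim : ringKrullDim
        (LaurentPolyRing k m ⧸
          (Ideal.span {(X : LaurentPolyRing k m)} ⊔ 𝔞)) = 1) :
    (∀ a : LaurentPolyRing k m, (∃ n : ℕ, X ^ n * a ∈ 𝔞) ↔ a ∈ 𝔞) ∧
    (∀ a : LaurentPolyRing k m, X * a ∈ 𝔞 → a ∈ 𝔞) := by
  have key : ∀ a : LaurentPolyRing k m, X * a ∈ 𝔞 → a ∈ 𝔞 := by
    intro a ha
    by_contra hna
    have := aux_jac k (m + 1)
    have := aux_noeth k (m + 1)
    have hJ : 𝔞.colon {a} ≠ ⊤ := by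
      intro h
      have : (1 : LaurentPolyRing k m) ∈ 𝔞.colon {a} := h ▸ Submodule.mem_top
      rw [Submodule.mem_colon_singleton] at this
      exact hna (by simpa using this)
    obtain ⟨P, hP, hJP⟩ := Ideal.exists_le_maximal _ hJ
    have hXP : X ∈ P := hJP (by rw [Submodule.mem_colon_singleton]; exact ha)
    have haP : 𝔞 ≤ P := fun b hb => hJP (by
      rw [Submodule.mem_colon_singleton]; exact 𝔞.mul_mem_right _ hb)
    have : P.IsPrime := hP.isPrime
    let R := Localization.AtPrime P
    have hnoR : IsNoetherianRing R := IsLocalization.isNoetherianRing P.primeCompl R inferInstance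
    let φ := algebraMap (LaurentPolyRing k m) R
    have hgen : Ideal.ofList (gens.toList.map φ) = 𝔞.map φ := by
      rw [← Ideal.map_ofList, ← hspan]
      have : {r | r ∈ gens.toList} = (gens : Set (LaurentPolyRing k m)) := by
        ext x
        simp
      unfold Ideal.ofList
      rw [this]
    have hofl : Ideal.ofList (gens.toList.map φ ++ [φ X]) =
        (Ideal.span {(X : LaurentPolyRing k m)} ⊔ 𝔞).map φ := by
      rw [Ideal.ofList_append, hgen, Ideal.ofList_singleton, Ideal.map_sup, Ideal.map_span,
        Set.image_singleton, sup_comm]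
    have hmax : ∀ b ∈ P, φ b ∈ IsLocalRing.maximalIdeal R := fun b hb =>
      (IsLocalization.AtPrime.to_map_mem_maximal_iff R P b).mpr hb
    have hw : RingTheory.Sequence.IsWeaklyRegular R (gens.toList.map φ ++ [φ X]) := by
      refine aux_main _ ?_ (m + 2) R ?_ ?_
      · intro r hr
        rcases List.mem_append.mp hr with hr | hr
        · obtain ⟨s, hs, rfl⟩ := List.mem_map.mp hr
          exact hmax s (haP (hspan ▸ Ideal.subset_span (by simpa using hs)))
        · simp only [List.mem_singleton] at hr
          exact hr ▸ hmax X hXP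
      · obtain ⟨ys, hlen, hys, hyreg⟩ := (aux_depth k (m + 1)).polynomial P hP
        refine ⟨ys.map φ, by simp [hlen], ?_, hyreg.isRegular_of_isLocalization_of_mem R P hys⟩
        intro r hr
        obtain ⟨s, hs, rfl⟩ := List.mem_map.mp hr
        exact hmax s (hys s hs)
      · have h1 := aux_loc_dim (Ideal.span {(X : LaurentPolyRing k m)} ⊔ 𝔞) P
        rw [hdim] at h1
        rw [smul_eq_mul, Ideal.mul_top, Module.supportDim_quotient_eq_ringKrullDim, hofl]
        refine (add_le_add_left h1 _).trans (le_of_eq ?_)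
        simp only [List.length_append, List.length_map, Finset.length_toList, hcard,
          List.length_singleton]
        push_cast
        rw [add_comm, add_assoc]
        norm_num
    rw [RingTheory.Sequence.isWeaklyRegular_append_iff,
      RingTheory.Sequence.isWeaklyRegular_singleton_iff] at hw
    have h2 := (isSMulRegular_quotient_iff_mem_of_smul_mem _ _).mp hw.2 (φ a)
    rw [smul_eq_mul, smul_eq_mul, Ideal.mul_top, hgen, ← map_mul] at h2
    have h3 := h2 (Ideal.mem_map_of_mem φ ha)
    obtain ⟨s, hs, hsa⟩ := (IsLocalization.algebraMap_mem_map_algebraMap_iff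
      P.primeCompl R 𝔞 a).mp h3
    exact hs (hJP (by rw [Submodule.mem_colon_singleton]; exact hsa))
  refine ⟨fun a => ⟨?_, fun h => ⟨0, by simpa using h⟩⟩, key⟩
  rintro ⟨n, hn⟩
  induction n with
  | zero => simpa using hn
  | succ n ih =>
    apply ih
    apply key
    rwa [← mul_assoc, ← pow_succ']
end
end

section
/- Let k be a field and f = Σ_{(i,j)∈ℤ²} c_{ij} x^i y^j a nonzero Laurent polynomial in k[x^{±1},y^{±1}], with Newton polygon Δ the convex hull of {(i,j) : c_{ij} ≠ 0}. Let ℓ be an edge of Δ whose normal vector is the primitive vector β = (β₁,β₂) ∈ ℤ² (so that β₁i + β₂j attains its minimum over Δ exactly on ℓ), and choose δ₁, δ₂ ∈ ℤ with δ₁β₂ − δ₂β₁ = 1. Let F ∈ k[X,Y] with Y ∤ F and n_X, n_Y ∈ ℤ be determined by f(X^{δ₁}Y^{β₁}, X^{δ₂}Y^{β₂}) = X^{n_X} Y^{n_Y} F(X,Y). If (i₀,j₀), …, (i_l,j_l) are the lattice points of ℓ ∩ ℤ², ordered so that (i_r,j_r) = (i₀,j₀) + r(β₂,−β₁), then F(X,0)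 = X^d · Σ_{r=0}^{l} c_{i_r j_r} X^r for some d ∈ ℕ. -/
/-- **Propositions 4.1 and 4.11** of the paper.  Let `f = Σ c_{ij} xⁱ yʲ` be a
nonzero Laurent polynomial over a field `k` (recorded here by its finitely
supported coefficient function on `ℤ²`), and let `ℓ` be an edge of its Newton
polygon with primitive normal vector `β = (β₁, β₂)`: the linear form
`β₁ i + β₂ j` attains its minimum `m` over the support of `f` exactly at
lattice points of `ℓ`, and the lattice points of `ℓ ∩ ℤ²` are
`(i_r, j_r) = (i₀, j₀) + r (β₂, -β₁)` for `0 ≤ r ≤ l`, the two endpoints being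
vertices of the Newton polygon (hence having nonzero coefficients).  Choose
`δ₁, δ₂ ∈ ℤ` with `δ₁ β₂ - δ₂ β₁ = 1` and let `F ∈ k[X,Y]` with `Y ∤ F` and
`n_X, n_Y ∈ ℤ` be determined by
`f(X^{δ₁} Y^{β₁}, X^{δ₂} Y^{β₂}) = X^{n_X} Y^{n_Y} F(X, Y)`
(the substitution `x = X^{δ₁}Y^{β₁}`, `y = X^{δ₂}Y^{β₂}` sends the monomial
`xⁱyʲ` to `X^{δ₁ i + δ₂ j} Y^{β₁ i + β₂ j}`, i.e. it is `Finsupp.mapDomain`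
along the corresponding linear map of exponents).  Then
`F(X, 0) = X^d ⬝ Σ_{r=0}^{l} c_{i_r j_r} X^r` for some `d ∈ ℕ`. -/
theorem newton_edge_restriction
    (k : Type) [Field k] (f : (ℤ × ℤ) →₀ k) (hf : f ≠ 0)
    (β δ : ℤ × ℤ) (hβprim : Int.gcd β.1 β.2 = 1)
    (hδ : δ.1 * β.2 - δ.2 * β.1 = 1)
    (m : ℤ) (hmin : ∀ p ∈ f.support, m ≤ β.1 * p.1 + β.2 * p.2)
    (i₀ j₀ : ℤ) (l : ℕ)
    (hvertex₀ : f (i₀, j₀) ≠ 0)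
    (hedge₀ : β.1 * i₀ + β.2 * j₀ = m)
    (hvertex₁ : f (i₀ + (l : ℤ) * β.2, j₀ - (l : ℤ) * β.1) ≠ 0)
    (hedge : ∀ p ∈ f.support, β.1 * p.1 + β.2 * p.2 = m →
      ∃ r : ℕ, r ≤ l ∧ p = (i₀ + (r : ℤ) * β.2, j₀ - (r : ℤ) * β.1))
    (F : (ℤ × ℤ) →₀ k) (nX nY : ℤ)
    (hFpoly : ∀ p ∈ F.support, 0 ≤ p.1 ∧ 0 ≤ p.2)
    (hFY : ∃ p ∈ F.support, p.2 = 0)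
    (heq : Finsupp.mapDomain
        (fun p : ℤ × ℤ => (δ.1 * p.1 + δ.2 * p.2, β.1 * p.1 + β.2 * p.2)) f =
      Finsupp.mapDomain (fun p : ℤ × ℤ => (p.1 + nX, p.2 + nY)) F) :
    ∃ d : ℕ,
      (∀ r : ℕ, r ≤ l →
        F ((d : ℤ) + (r : ℤ), 0) = f (i₀ + (r : ℤ) * β.2, j₀ - (r : ℤ) * β.1)) ∧
      (∀ i : ℤ, F (i, 0) ≠ 0 → ∃ r : ℕ, r ≤ l ∧ i = (d : ℤ) + (r : ℤ)) := by
  have hφ : Function.Injective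
      (fun p : ℤ × ℤ => (δ.1 * p.1 + δ.2 * p.2, β.1 * p.1 + β.2 * p.2)) := by
    rintro ⟨a, b⟩ ⟨c, e⟩ h
    simp only [Prod.mk.injEq] at h
    obtain ⟨h1, h2⟩ := h
    ext
    · show a = c
      linear_combination β.2 * h1 - δ.2 * h2 - (a - c) * hδ
    · show b = e
      linear_combination δ.1 * h2 - β.1 * h1 - (b - e) * hδ
  have hψ : Function.Injective (fun p : ℤ × ℤ => (p.1 + nX, p.2 + nY)) := by
    rintro ⟨a, b⟩ ⟨c, e⟩ h
    simpa using h
  have key : ∀ a b i j : ℤ, δ.1 * i + δ.2 * j = a + nX → β.1 * i + β.2 * j = b + nY →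
      F (a, b) = f (i, j) := by
    intro a b i j h1 h2
    have e1 := Finsupp.mapDomain_apply hφ f (i, j)
    have e2 := Finsupp.mapDomain_apply hψ F (a, b)
    simp only [h1, h2] at e1
    rw [← e1, ← e2, heq]
  have hm1 : 0 ≤ m - nY := by
    have := key (δ.1 * i₀ + δ.2 * j₀ - nX) (m - nY) i₀ j₀ (by ring) (by linarith)
    exact (hFpoly _ (Finsupp.mem_support_iff.2 (this ▸ hvertex₀))).2
  have inv : ∀ a b : ℤ, F (a, b) =
      f (β.2 * (a + nX) - δ.2 * (b + nY), δ.1 * (b + nY) - β.1 * (a + nX)) := by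
    intro a b
    apply key
    · linear_combination (a + nX) * hδ
    · linear_combination (b + nY) * hδ
  have hm2 : m ≤ nY := by
    obtain ⟨⟨a, b⟩, hq, hb⟩ := hFY
    simp only at hb
    subst hb
    rw [Finsupp.mem_support_iff, inv] at hq
    have := hmin _ (Finsupp.mem_support_iff.2 hq)
    simp only at this
    linear_combination this + nY * hδ
  have hm : m = nY := by omega
  have hd : 0 ≤ δ.1 * i₀ + δ.2 * j₀ - nX := by
    have := key (δ.1 * i₀ + δ.2 * j₀ - nX) (m - nY) i₀ j₀ (by ring) (by linarith)
    exact (hFpoly _ (Finsupp.mem_support_iff.2 (this ▸ hvertex₀))).1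
  obtain ⟨d, hd'⟩ := Int.eq_ofNat_of_zero_le hd
  refine ⟨d, ?_, ?_⟩
  · intro r _
    apply key
    · linear_combination hd' + r * hδ
    · linear_combination hedge₀ + hm
  · intro i hi
    rw [inv] at hi
    obtain ⟨r, hr, h⟩ := hedge _ (Finsupp.mem_support_iff.2 hi)
      (by simp only; linear_combination nY * hδ - hm)
    refine ⟨r, hr, ?_⟩
    simp only [Prod.mk.injEq] at h
    obtain ⟨h1, h2⟩ := h
    linear_combination δ.1 * h1 + δ.2 * h2 + hd' + (r - i - nX) * hδ
end

section
/- Let K be an infinite field and let L₁, …, L_m be finite separable field extensions of K. Then there exists a separable polynomial f ∈ K[y] such that the product K-algebra L₁ × ⋯ × L_m is isomorphic, as a K-algebra, to K[y]/(f). -/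
open Polynomial

theorem aux_exists_prim {K : Type} [Field K] [Infinite K] {m : ℕ} (L : Fin m → Type)
    [∀ i, Field (L i)] [∀ i, Algebra K (L i)]
    [∀ i, FiniteDimensional K (L i)] [∀ i, Algebra.IsSeparable K (L i)] (s : Finset (Fin m)) :
    ∃ a : ∀ i, L i, (∀ i, Algebra.adjoin K {a i} = ⊤) ∧
      ∀ i ∈ s, ∀ j ∈ s, i ≠ j → minpoly K (a i) ≠ minpoly K (a j) := by
  classical
  induction s using Finset.induction_on with
  | empty =>
    have h : ∀ i, ∃ a : L i, Algebra.adjoin K {a} = ⊤ := by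
      intro i
      obtain ⟨a, ha⟩ := Field.exists_primitive_element K (L i)
      refine ⟨a, ?_⟩
      rw [← IntermediateField.adjoin_simple_toSubalgebra_of_isAlgebraic
        (Algebra.IsAlgebraic.isAlgebraic a), ha, IntermediateField.top_toSubalgebra]
    choose a ha using h
    exact ⟨a, ha, by simp⟩
  | insert k s hk ih =>
    obtain ⟨a, ha, hs⟩ := ih
    set P : K[X] := ∏ j ∈ s, minpoly K (a j) with hP
    have hP0 : P ≠ 0 := Finset.prod_ne_zero_iff.2 fun j _ =>
      minpoly.ne_zero (Algebra.IsIntegral.isIntegral (a j))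
    have hfin : {c : K | aeval (a k + algebraMap K (L k) c) P = 0}.Finite := by
      have h1 := P.rootSet_finite (L k)
      refine Set.Finite.subset (h1.preimage
        (f := fun c : K => a k + algebraMap K (L k) c) ?_) ?_
      · intro x _ y _ hxy
        exact (algebraMap K (L k)).injective (add_left_cancel hxy)
      · intro c hc
        exact (mem_rootSet_of_ne hP0).2 hc
    obtain ⟨c, hc⟩ := hfin.exists_notMem
    have hne : ∀ j ∈ s, minpoly K (a k + algebraMap K (L k) c) ≠ minpoly K (a j) := by
      intro j hj h
      apply hc
      have : minpoly K (a k + algebraMap K (L k) c) ∣ P := h ▸ Finset.dvd_prod_of_mem _ hj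
      exact (minpoly.dvd_iff).1 this
    have hne' : ∀ j ∈ s, j ≠ k := fun j hj h => hk (h ▸ hj)
    refine ⟨Function.update a k (a k + algebraMap K (L k) c), ?_, ?_⟩
    · intro i
      by_cases hi : i = k
      · subst hi
        rw [Function.update_self, eq_top_iff, ← ha i]
        refine Algebra.adjoin_le ?_
        rintro _ rfl
        have h1 := Algebra.self_mem_adjoin_singleton K (a i + algebraMap K (L i) c)
        have := sub_mem h1 (algebraMap_mem (Algebra.adjoin K {a i + algebraMap K (L i) c}) c)
        simpa using this
      · rw [Function.update_of_ne hi]; exact ha i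
    · intro i hi j hj hij
      rcases Finset.mem_insert.1 hi with rfl | hi'
      · rcases Finset.mem_insert.1 hj with rfl | hj'
        · exact absurd rfl hij
        · rw [Function.update_self, Function.update_of_ne (hne' j hj')]
          exact hne j hj'
      · rcases Finset.mem_insert.1 hj with rfl | hj'
        · rw [Function.update_self, Function.update_of_ne (hne' i hi')]
          exact (hne i hi').symm
        · rw [Function.update_of_ne (hne' i hi'), Function.update_of_ne (hne' j hj')]
          exact hs i hi' j hj' hij

/-- **Lemma A.1 (algebraic core)** of the paper.  Let `K` be an infinite field
and let `L₁, …, L_m` be finite separable field extensions of `K`.  Then there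
exists a separable polynomial `f ∈ K[y]` such that the product `K`-algebra
`L₁ × ⋯ × L_m` is isomorphic, as a `K`-algebra, to `K[y]/(f)`. -/
theorem prod_of_finite_separable_field_extensions_is_quotient_by_separable
    (K : Type) [Field K] [Infinite K] (m : ℕ) (L : Fin m → Type)
    [∀ i, Field (L i)] [∀ i, Algebra K (L i)]
    [∀ i, FiniteDimensional K (L i)] [∀ i, Algebra.IsSeparable K (L i)] :
    ∃ f : K[X], f.Separable ∧
      Nonempty ((∀ i, L i) ≃ₐ[K] (K[X] ⧸ Ideal.span {f})) := by
  classical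
  obtain ⟨a, ha, hne⟩ := aux_exists_prim (K := K) L Finset.univ
  have hint : ∀ i, IsIntegral K (a i) := fun i => Algebra.IsIntegral.isIntegral (a i)
  have hco : Pairwise (Function.onFun IsCoprime fun i => minpoly K (a i)) := by
    intro i j hij
    refine ((minpoly.irreducible (hint i)).coprime_iff_not_dvd).2 fun h => ?_
    exact hne i (Finset.mem_univ _) j (Finset.mem_univ _) hij
      (eq_of_monic_of_associated (minpoly.monic (hint i)) (minpoly.monic (hint j))
        ((minpoly.irreducible (hint i)).associated_of_dvd (minpoly.irreducible (hint j)) h))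
  refine ⟨∏ i, minpoly K (a i), separable_prod hco
    fun i => Algebra.IsSeparable.isSeparable K (a i), ?_⟩
  let φ : K[X] →ₐ[K] (∀ i, L i) := AlgHom.pi fun i => aeval (a i)
  have hφ : ∀ p i, φ p i = aeval (a i) p := fun _ _ => rfl
  have hker : RingHom.ker φ = Ideal.span {∏ i, minpoly K (a i)} := by
    ext p
    rw [RingHom.mem_ker, Ideal.mem_span_singleton, funext_iff]
    constructor
    · intro h
      exact Fintype.prod_dvd_of_coprime hco fun i => minpoly.dvd K (a i) (h i)
    · intro h i
      exact minpoly.dvd_iff.1 ((Finset.dvd_prod_of_mem _ (Finset.mem_univ i)).trans h)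
  have hsurj : Function.Surjective φ := by
    intro x
    have h1 : ∀ i, ∃ q : K[X], aeval (a i) q = x i := by
      intro i
      have : x i ∈ Algebra.adjoin K {a i} := by rw [ha i]; trivial
      rwa [Algebra.adjoin_singleton_eq_range_aeval] at this
    choose q hq using h1
    obtain ⟨p, hp⟩ := Ideal.exists_forall_sub_mem_ideal
      (I := fun i => Ideal.span {minpoly K (a i)})
      (fun i j hij => (Ideal.isCoprime_span_singleton_iff _ _).2 (hco hij)) q
    refine ⟨p, funext fun i => ?_⟩
    have h2 := minpoly.dvd_iff.1 (Ideal.mem_span_singleton.1 (hp i))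
    rw [map_sub, sub_eq_zero] at h2
    rw [hφ, h2, hq]
  exact ⟨((Ideal.quotientEquivAlgOfEq K hker.symm).trans
    (Ideal.quotientKerAlgEquivOfSurjective hsurj)).symm⟩
end

section
/- Let k be a perfect field and let Z be a geometrically reduced, separated algebraic variety over k, pure of dimension n, where either n > 0 or k is infinite. Then there exists a polynomial g ∈ k[x₁,…,x_n,y] such that the affine hypersurface V : g = 0 in A_k^{n+1} is smooth over k and birational to Z; that is, there exist dense open subschemes U ⊆ Z and W ⊆ V which are isomorphic as k-schemes. -/
open AlgebraicGeometry CategoryTheory Polynomial TopologicalSpace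

noncomputable section

namespace BakerModels

/-- The ring of Laurent polynomials in two variables over `k`,
`k[x^{±1}, y^{±1}]`, realised as the monoid algebra of `ℤ × ℤ`. -/
abbrev LaurentPoly₂ (k : Type) [CommRing k] : Type := AddMonoidAlgebra k (ℤ × ℤ)

/-- A finitely supported coefficient function determines a Laurent polynomial. -/
def ofCoeffs {k : Type} [CommRing k] (f : (ℤ × ℤ) →₀ k) : LaurentPoly₂ k := AddMonoidAlgebra.ofCoeff f

/-- Base change of a Laurent polynomial along a ring homomorphism (applied to
the coefficients). -/
def mapLaurent {k K : Type} [CommRing k] [CommRing K] (φ : k →+* K)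
    (f : LaurentPoly₂ k) : LaurentPoly₂ K :=
  ofCoeffs (Finsupp.mapRange φ φ.map_zero f.coeff)

/-- `Spec k`, the base scheme of a field (or commutative ring) `k`. -/
abbrev SpecOf (k : Type) [CommRing k] : Scheme := Spec (CommRingCat.of k)

/-- The affine curve `C₀ : f = 0` in the two–dimensional torus
`𝔾ₘ² = Spec k[x^{±1}, y^{±1}]`. -/
def torusCurve (k : Type) [CommRing k] (f : LaurentPoly₂ k) : Scheme :=
  Spec (CommRingCat.of (LaurentPoly₂ k ⧸ Ideal.span {f}))

/-- The structure morphism of `torusCurve k f` over `Spec k`. -/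
def torusCurveOver (k : Type) [CommRing k] (f : LaurentPoly₂ k) :
    torusCurve k f ⟶ SpecOf k :=
  Spec.map (CommRingCat.ofHom (algebraMap k (LaurentPoly₂ k ⧸ Ideal.span {f})))

/-- A (Noetherian) local ring is *regular* if its maximal ideal can be generated
by `dim R` many elements. -/
def IsRegularLocalRing (R : Type) [CommRing R] [IsLocalRing R] : Prop :=
  IsNoetherianRing R ∧
    ∃ s : Finset R, Ideal.span (s : Set R) = IsLocalRing.maximalIdeal R ∧
      (s.card : WithBot (WithTop ℕ)) = ringKrullDim R

/-- A scheme is *regular at a point* if its stalk there is a regular local ring.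
(Over a perfect base field this is the same as smoothness at the point.) -/
def RegularAt (X : Scheme) (x : X) : Prop :=
  IsRegularLocalRing (X.presheaf.stalk x)

/-- The regular locus `Reg X` of a scheme. -/
def regularLocus (X : Scheme) : Set X := {x | RegularAt X x}

/-- The singular locus `Sing X` of a scheme. -/
def singularLocus (X : Scheme) : Set X := {x | ¬ RegularAt X x}

/-- A scheme is regular if it is regular at all of its points. -/
def RegularScheme (X : Scheme) : Prop := ∀ x, RegularAt X x

/-- A morphism of schemes is *birational* if it restricts to an isomorphism
over a dense open of the target. -/
def IsBirationalHom {X Y : Scheme} (f : X ⟶ Y) : Prop :=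
  ∃ V : Y.Opens, Dense (V : Set Y) ∧ IsIso (f ∣_ V)

/-- Two schemes over a common base are *birational over the base* if they
contain isomorphic dense open subschemes (the isomorphism commuting with the
structure morphisms). -/
def AreBirationalOver {S X Y : Scheme} (φX : X ⟶ S) (φY : Y ⟶ S) : Prop :=
  ∃ (U : X.Opens) (V : Y.Opens) (e : U.toScheme ≅ V.toScheme),
    Dense (U : Set X) ∧ Dense (V : Set Y) ∧ e.hom ≫ V.ι ≫ φY = U.ι ≫ φX

/-- A *curve* is an (equidimensional) scheme all of whose irreducible
components are one-dimensional. -/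
def IsCurve (X : Scheme) : Prop :=
  ∀ T ∈ irreducibleComponents (X : Type), topologicalKrullDim T = 1

/-- A projective curve over a field `k` (a proper curve over `Spec k`). -/
structure ProjCurve (k : Type) [Field k] where
  X : Scheme
  structMap : X ⟶ SpecOf k
  isCurve : IsCurve X
  proper : IsProper structMap

/-- A smooth projective curve over a field `k`. -/
structure SmoothProjCurve (k : Type) [Field k] extends ProjCurve k where
  smooth : IsSmooth structMap


theorem dim_of_integral {R S : Type*} [CommRing R] [CommRing S] [Algebra R S]
    [Algebra.IsIntegral R S] (hinj : Function.Injective (algebraMap R S)) :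
    ringKrullDim S = ringKrullDim R := by
  apply le_antisymm
  · refine Order.krullDim_le_of_strictMono (PrimeSpectrum.comap (algebraMap R S)) ?_
    intro p q hpq
    exact Ideal.IsIntegral.comap_lt_comap (R := R) (I := p.asIdeal) (J := q.asIdeal) hpq
  · refine iSup_le fun l => ?_
    have : FaithfulSMul R S := (faithfulSMul_iff_algebraMap_injective R S).mpr hinj
    obtain ⟨Q, hQ, hQ'⟩ : ∃ Q : Ideal S, ∃ _ : Q.IsPrime, Q.LiesOver l.head.asIdeal := by
      obtain ⟨Q, _, h1, h2⟩ := Ideal.exists_ideal_over_prime_of_isIntegral l.head.asIdeal (⊥ : Ideal S)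
        (by simp [← RingHom.ker_eq_comap_bot, (RingHom.injective_iff_ker_eq_bot _).1 hinj])
      exact ⟨Q, h1, ⟨h2.symm⟩⟩
    obtain ⟨L, hL, -⟩ := Ideal.exists_ltSeries_of_hasGoingUp (S := S) l Q
    rw [← hL]
    exact le_iSup (fun l : LTSeries (PrimeSpectrum S) => (l.length : WithBot ℕ∞)) L

theorem trdeg_of_dim {k R K : Type} [Field k] [CommRing R] [IsDomain R] [Algebra k R]
    [Algebra.FiniteType k R] [Field K] [Algebra k K] [Algebra R K] [IsScalarTower k R K] [IsFractionRing R K]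
    (n : ℕ) (hn : ringKrullDim R = n) : Algebra.trdeg k K = n := by
  obtain ⟨s, g, hg, hfin⟩ := exists_finite_inj_algHom_of_fg k R
  let := g.toRingHom.toAlgebra
  have : Algebra.IsIntegral (MvPolynomial (Fin s) k) R := ⟨hfin.to_isIntegral⟩
  have h := dim_of_integral (R := MvPolynomial (Fin s) k) (S := R) hg
  rw [MvPolynomial.ringKrullDim_of_isNoetherianRing, ringKrullDim_eq_zero_of_field, hn] at h
  have hs : n = s := by simpa using! h
  subst hs
  have : IsScalarTower k (MvPolynomial (Fin n) k) R := .of_algebraMap_eq fun x => (g.commutes x).symm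
  let := ((algebraMap R K).comp g.toRingHom).toAlgebra
  have : IsScalarTower (MvPolynomial (Fin n) k) R K := .of_algebraMap_eq fun x => rfl
  have : FaithfulSMul (MvPolynomial (Fin n) k) R := (faithfulSMul_iff_algebraMap_injective _ _).mpr hg
  have : FaithfulSMul (MvPolynomial (Fin n) k) K := (faithfulSMul_iff_algebraMap_injective _ _).mpr
    ((IsFractionRing.injective R K).comp hg)
  have : IsScalarTower k (MvPolynomial (Fin n) k) K := .of_algebraMap_eq fun x => by
    rw [IsScalarTower.algebraMap_apply k R K, IsScalarTower.algebraMap_apply (MvPolynomial (Fin n) k) R K,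
      IsScalarTower.algebraMap_apply k (MvPolynomial (Fin n) k) R]
  have : Algebra.IsAlgebraic R K := IsLocalization.isAlgebraic K (nonZeroDivisors R)
  have : Algebra.IsAlgebraic (MvPolynomial (Fin n) k) K := Algebra.IsAlgebraic.trans _ R K
  have h2 := _root_.trdeg_add_eq k (MvPolynomial (Fin n) k) (A := K)
  rw [← h2, MvPolynomial.trdeg_of_isDomain, _root_.trdeg_eq_zero]
  simp
theorem sepgen {k K : Type} [Field k] [PerfectField k] [Field K] [Algebra k K]
    [Algebra.EssFiniteType k K] (n : ℕ) (hn : Algebra.trdeg k K = n) :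
    ∃ (ρ : FractionRing (MvPolynomial (Fin n) k) →ₐ[k] K) (α : K)
      (p : Polynomial (FractionRing (MvPolynomial (Fin n) k))),
      Irreducible p ∧ p.Separable ∧ p.eval₂ ρ.toRingHom α = 0 ∧
      ∀ z : K, ∃ q : Polynomial (FractionRing (MvPolynomial (Fin n) k)), q.eval₂ ρ.toRingHom α = z := by
  obtain ⟨s, hs, hsep⟩ := exists_isTranscendenceBasis_and_isSeparable_of_perfectField k K
  have hcard : s.card = n := by
    have := hs.cardinalMk_eq_trdeg
    rw [hn] at this
    simpa using this
  let e : Fin n ≃ s := (finCongr hcard.symm).trans s.equivFin.symm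
  let x : Fin n → K := fun i => (e i : K)
  have hx : AlgebraicIndependent k x := hs.1.comp e e.injective
  have hr : Set.range x = (s : Set K) := by
    have : x = Subtype.val ∘ e := rfl
    rw [this, Set.range_comp, e.range_eq_univ]; simp
  rw [← hr] at hsep
  let E := hx.aevalEquivField
  let L := IntermediateField.adjoin k (Set.range x)
  change Algebra.IsSeparable L K at hsep
  have : Algebra.EssFiniteType L K := .of_comp k L K
  have : FiniteDimensional L K := Algebra.finite_of_essFiniteType_of_isAlgebraic
  obtain ⟨α, hα⟩ := Field.exists_primitive_element L K
  have hint : IsIntegral L α := Algebra.IsIntegral.isIntegral α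
  refine ⟨L.val.comp E.toAlgHom, α, (minpoly L α).map E.symm.toRingEquiv.toRingHom, ?_, ?_, ?_, ?_⟩
  · exact (MulEquiv.irreducible_iff (Polynomial.mapEquiv E.symm.toRingEquiv)).mpr (minpoly.irreducible hint)
  · have h : (minpoly L α).Separable := Algebra.IsSeparable.isSeparable L α
    exact h.map
  · rw [Polynomial.eval₂_map]
    have : ((L.val.comp E.toAlgHom).toRingHom.comp E.symm.toRingEquiv.toRingHom) = algebraMap L K := by
      ext a; simp
    rw [this]; exact minpoly.aeval L α
  · intro z
    have : z ∈ Algebra.adjoin L {α} := by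
      have h := IntermediateField.adjoin_simple_toSubalgebra_of_isAlgebraic hint.isAlgebraic
      rw [← h, hα]; trivial
    rw [Algebra.adjoin_singleton_eq_range_aeval] at this
    obtain ⟨q, rfl⟩ := this
    refine ⟨q.map E.symm.toRingEquiv.toRingHom, ?_⟩
    rw [Polynomial.eval₂_map]
    have : ((L.val.comp E.toAlgHom).toRingHom.comp E.symm.toRingEquiv.toRingHom) = algebraMap L K := by
      ext a; simp
    rw [this]; rfl
open Polynomial in
theorem exists_shift {F : Type} [Field F] [Infinite F] (p Q : F[X]) (hp : Irreducible p) (hQ : Q ≠ 0) :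
    ∃ c : F, IsCoprime (taylor c p) Q := by
  by_contra! H
  have hdvd : ∀ c, taylor c p ∣ Q := by
    intro c
    have h1 : Irreducible (taylor c p) := (MulEquiv.irreducible_iff (taylorEquiv c)).mpr hp
    exact (Irreducible.dvd_iff_not_isCoprime h1).mpr (H c)
  obtain ⟨b, hb⟩ := IsAlgClosed.exists_aeval_eq_zero (AlgebraicClosure F) p hp.degree_pos.ne'
  have hroot : ∀ c : F, aeval (b - algebraMap F _ c) Q = 0 := by
    intro c
    obtain ⟨u, hu⟩ := hdvd c
    rw [hu, map_mul]
    simp [taylor_apply, aeval_comp, hb]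
  have hfin : (Q.rootSet (AlgebraicClosure F)).Finite := Q.rootSet_finite _
  refine Set.infinite_of_injective_forall_mem (f := fun c : F => b - algebraMap F (AlgebraicClosure F) c) ?_ ?_ hfin
  · intro x y hxy
    simpa using hxy
  · intro c
    rw [mem_rootSet]
    exact ⟨hQ, hroot c⟩

open Polynomial in
theorem combine {F : Type} [Field F] [Infinite F] {ι : Type} [Fintype ι] (K : ι → Type)
    [∀ i, Field (K i)] (ρ : ∀ i, F →+* K i)
    (h : ∀ i, ∃ (α : K i) (p : F[X]), Irreducible p ∧ p.Separable ∧ p.eval₂ (ρ i) α = 0 ∧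
      ∀ z : K i, ∃ q : F[X], q.eval₂ (ρ i) α = z) :
    ∃ (β : ∀ i, K i) (P : F[X]), P.Separable ∧ P.eval 0 ≠ 0 ∧
      (∀ q : F[X], (∀ i, q.eval₂ (ρ i) (β i) = 0) ↔ P ∣ q) ∧
      ∀ z : ∀ i, K i, ∃ q : F[X], ∀ i, q.eval₂ (ρ i) (β i) = z i := by
  classical
  choose α p hirr hsep hroot hsurj using h
  have key : ∀ s : Finset ι, ∃ c : ι → F, (∀ i ∈ s, IsCoprime (taylor (c i) (p i)) X) ∧
      (s : Set ι).Pairwise (fun i j => IsCoprime (taylor (c i) (p i)) (taylor (c j) (p j))) := by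
    intro s
    induction s using Finset.induction_on with
    | empty => exact ⟨0, by simp, by simp⟩
    | insert a s ha ih =>
      obtain ⟨c, hc1, hc2⟩ := ih
      obtain ⟨d, hd⟩ := exists_shift (p a) (X * ∏ i ∈ s, taylor (c i) (p i)) (hirr a) (by
        refine mul_ne_zero X_ne_zero (Finset.prod_ne_zero_iff.mpr fun i _ => ?_)
        simpa using! (hirr i).ne_zero)
      have hne : ∀ i ∈ s, i ≠ a := fun i hi e => ha (e ▸ hi)
      have hda : ∀ i ∈ s, IsCoprime (taylor d (p a)) (taylor (c i) (p i)) := fun i hi =>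
        hd.of_isCoprime_of_dvd_right ((Finset.dvd_prod_of_mem _ hi).mul_left _)
      refine ⟨Function.update c a d, ?_, ?_⟩
      · intro i hi
        rcases Finset.mem_insert.mp hi with rfl | hi
        · simpa using! hd.of_isCoprime_of_dvd_right (Dvd.intro _ rfl)
        · rw [Function.update_of_ne (hne i hi)]; exact hc1 i hi
      · intro i hi j hj hij
        rcases Finset.mem_insert.mp (Finset.mem_coe.mp hi) with e | hi1 <;>
          rcases Finset.mem_insert.mp (Finset.mem_coe.mp hj) with e' | hj1
        · exact absurd (e.trans e'.symm) hij
        · subst e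
          rw [Function.update_of_ne (hne j hj1)]; simpa using hda j hj1
        · subst e'
          rw [Function.update_of_ne (hne i hi1)]; simpa using (hda i hi1).symm
        · rw [Function.update_of_ne (hne i hi1), Function.update_of_ne (hne j hj1)]
          exact hc2 hi1 hj1 hij
  obtain ⟨c, hc1, hc2⟩ := key Finset.univ
  have hcop : ∀ i j, i ≠ j → IsCoprime (taylor (c i) (p i)) (taylor (c j) (p j)) :=
    fun i j hij => hc2 (by simp) (by simp) hij
  have hev : ∀ i (q : F[X]), (taylor (c i) q).eval₂ (ρ i) (α i - ρ i (c i)) = q.eval₂ (ρ i) (α i) := by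
    intro i q
    simp [taylor_apply, eval₂_comp]
  have hroot' : ∀ i, (taylor (c i) (p i)).eval₂ (ρ i) (α i - ρ i (c i)) = 0 := fun i => by
    rw [hev, hroot]
  refine ⟨fun i => α i - ρ i (c i), ∏ i, taylor (c i) (p i), ?_, ?_, ?_, ?_⟩
  · refine separable_prod (fun i j hij => hcop i j hij) (fun i => ?_)
    have h := IsCoprime.map (hsep i) (taylorEquiv (c i) : F[X] →+* F[X])
    rw [separable_def]
    have e : derivative (taylor (c i) (p i)) = taylor (c i) (derivative (p i)) := by
      simp [taylor_apply, derivative_comp]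
    rw [e]
    exact h
  · intro h0
    have : IsCoprime (∏ i, taylor (c i) (p i)) (X : F[X]) := IsCoprime.prod_left fun i hi => hc1 i hi
    obtain ⟨a, b, hab⟩ := this
    have := congrArg (eval 0) hab
    simp [h0] at this
  · intro q
    constructor
    · intro hq
      refine Finset.prod_dvd_of_coprime (fun i _ j _ hij => hcop i j hij) (fun i _ => ?_)
      have h1 : Irreducible (taylor (c i) (p i)) := (MulEquiv.irreducible_iff (taylorEquiv (c i))).mpr (hirr i)
      rw [Irreducible.dvd_iff_not_isCoprime h1]
      rintro ⟨a, b, hab⟩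
      have := congrArg (eval₂ (ρ i) (α i - ρ i (c i))) hab
      rw [eval₂_add, eval₂_mul, eval₂_mul, hroot', hq i] at this
      simp at this
    · rintro ⟨u, rfl⟩ i
      rw [eval₂_mul, eval₂_finsetProd, Finset.prod_eq_zero (Finset.mem_univ i) (hroot' i), zero_mul]
  · intro z
    choose q hq using fun i => hsurj i (z i)
    obtain ⟨r, hr⟩ := Ideal.exists_forall_sub_mem_ideal (I := fun i => Ideal.span {taylor (c i) (p i)})
      (fun i j hij => (Ideal.isCoprime_span_singleton_iff _ _).mpr (hcop i j hij)) (fun i => taylor (c i) (q i))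
    refine ⟨r, fun i => ?_⟩
    obtain ⟨u, hu⟩ := Ideal.mem_span_singleton.mp (hr i)
    have := congrArg (eval₂ (ρ i) (α i - ρ i (c i))) hu
    rw [eval₂_sub, eval₂_mul, hroot', hev, hq, zero_mul, sub_eq_zero] at this
    exact this
open Polynomial in
theorem exists_hyp {R F : Type} [CommRing R] [IsDomain R] [Field F] [Algebra R F] [IsFractionRing R F]
    (P : F[X]) (hP : P.Separable) (h0 : P.eval 0 ≠ 0) :
    ∃ (g : R[X]) (c d : F), c ≠ 0 ∧ d ≠ 0 ∧ g.coeff 0 = 1 ∧ g.Separable ∧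
      g.map (algebraMap R F) = C d * P.comp (C c * X) := by
  have hinj : Function.Injective (algebraMap R F) := IsFractionRing.injective R F
  have hcl : ∀ q : F[X], ∃ (q1 : R[X]) (s : R), s ≠ 0 ∧ q1.map (algebraMap R F) = C (algebraMap R F s) * q := by
    intro q
    obtain ⟨b, hb⟩ := IsLocalization.integerNormalization_map_to_map (nonZeroDivisors R) q
    exact ⟨_, b, nonZeroDivisors.ne_zero b.2, hb.trans (by
      rw [← smul_eq_C_mul]; simp)⟩
  obtain ⟨a, b, hab⟩ := hP
  obtain ⟨A, sa, hsa, hA⟩ := hcl a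
  obtain ⟨B, sb, hsb, hB⟩ := hcl b
  obtain ⟨P1, s, hs, hP1⟩ := hcl P
  obtain ⟨u, v, r, hr, huv⟩ : ∃ (u v : R[X]) (r : R), r ≠ 0 ∧ u * P1 + v * derivative P1 = C r := by
    refine ⟨C sb * A, C sa * B, sa * sb * s, mul_ne_zero (mul_ne_zero hsa hsb) hs, ?_⟩
    apply map_injective _ hinj
    simp only [Polynomial.map_add, Polynomial.map_mul, map_C, ← derivative_map, hA, hB, hP1, map_mul,
      derivative_C_mul]
    linear_combination (C (algebraMap R F sa) * C (algebraMap R F sb) * C (algebraMap R F s)) * hab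
  set a0 := P1.coeff 0 with ha0
  have ha0' : algebraMap R F a0 = algebraMap R F s * P.eval 0 := by
    rw [ha0, ← coeff_map, hP1, coeff_C_mul, coeff_zero_eq_eval_zero]
  have ha0ne : a0 ≠ 0 := by
    intro h
    rw [h, map_zero, eq_comm, mul_eq_zero] at ha0'
    rcases ha0' with h | h
    · exact hs ((map_eq_zero_iff _ hinj).mp h)
    · exact h0 h
  let h := r * a0
  let c := h * a0
  let q : R[X] := X * (divX P1).comp (C c * X)
  let g : R[X] := 1 + C h * q
  have hg : C a0 * g = P1.comp (C c * X) := by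
    conv_rhs => rw [← divX_mul_X_add P1]
    simp only [add_comp, mul_comp, X_comp, C_comp, g, q, c, map_mul, ← ha0]
    ring
  have hg' : derivative g = C h * (derivative P1).comp (C c * X) := by
    have := congrArg derivative hg
    rw [derivative_C_mul, derivative_comp] at this
    apply mul_left_cancel₀ (C_ne_zero.mpr ha0ne)
    rw [this]
    rw [derivative_C_mul, derivative_X, show (C c : R[X]) * 1 = C a0 * C h by simp [c, mul_comm], mul_assoc]
  have hh : h ≠ 0 := mul_ne_zero hr ha0ne
  refine ⟨g, algebraMap R F c, algebraMap R F s / algebraMap R F a0, ?_, ?_, ?_, ?_, ?_⟩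
  · exact (map_ne_zero_iff _ hinj).mpr (mul_ne_zero hh ha0ne)
  · exact div_ne_zero ((map_ne_zero_iff _ hinj).mpr hs) ((map_ne_zero_iff _ hinj).mpr ha0ne)
  · simp [g, q]
  · have h1 : IsCoprime g (C h) := ⟨1, -q, by simp only [g]; ring⟩
    have h2 : IsCoprime g (C r) := h1.of_isCoprime_of_dvd_right ⟨C a0, by simp [h]⟩
    have h3 := h1.mul_right h2
    have h4 : C h * C r = (C h * u.comp (C c * X) * C a0) * g + v.comp (C c * X) * derivative g := by
      have := congrArg (fun w => w.comp (C c * X)) huv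
      simp only [add_comp, mul_comp, C_comp] at this
      rw [← this, hg', ← hg]
      ring
    rw [h4, add_comm] at h3
    have h5 := IsCoprime.of_add_mul_right_right h3
    exact h5.of_mul_right_right
  · have := congrArg (map (algebraMap R F)) hg
    rw [Polynomial.map_mul, Polynomial.map_comp, hP1] at this
    simp only [map_C, mul_comp, C_comp, Polynomial.map_mul, map_X] at this
    have hne : C (algebraMap R F a0) ≠ 0 := C_ne_zero.mpr ((map_ne_zero_iff _ hinj).mpr ha0ne)
    apply mul_left_cancel₀ hne
    rw [this, ← mul_assoc, ← C_mul, mul_div_cancel₀ _ ((map_ne_zero_iff _ hinj).mpr ha0ne)]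

open Polynomial in
theorem dvd_of_map_dvd {R F : Type} [CommRing R] [IsDomain R] [UniqueFactorizationMonoid R] [Field F] [Algebra R F] [IsFractionRing R F]
    (g q : R[X]) (hg : g.coeff 0 = 1) (h : g.map (algebraMap R F) ∣ q.map (algebraMap R F)) : g ∣ q := by
  have hinj : Function.Injective (algebraMap R F) := IsFractionRing.injective R F
  obtain ⟨w, hw⟩ := h
  obtain ⟨b, hb⟩ := IsLocalization.integerNormalization_map_to_map (nonZeroDivisors R) w
  have hbne : (b : R) ≠ 0 := nonZeroDivisors.ne_zero b.2
  have h1 : g ∣ C (b : R) * q := by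
    refine ⟨IsLocalization.integerNormalization (nonZeroDivisors R) w, ?_⟩
    apply map_injective _ hinj
    rw [Polynomial.map_mul, Polynomial.map_mul, hw, hb, map_C]
    rw [show (b : R) • w = C (algebraMap R F b) * w by rw [← smul_eq_C_mul]; simp]
    ring
  refine IsRelPrime.dvd_of_dvd_mul_left ?_ h1
  intro d hd1 hd2
  have hdeg : d.natDegree = 0 := by
    have := natDegree_le_of_dvd hd2 (C_ne_zero.mpr hbne)
    simpa using this
  rw [eq_C_of_natDegree_eq_zero hdeg] at hd1 ⊢
  obtain ⟨w, hw⟩ := hd1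
  rw [isUnit_C]
  refine IsUnit.of_mul_eq_one (w.coeff 0) ?_
  rw [← hg, hw, coeff_C_mul]
open AlgebraicGeometry in
theorem locS_exists {k A Q : Type} [Field k] [CommRing A] [CommRing Q] [Algebra k A] [Algebra k Q]
    (f : A →ₐ[k] Q) (hf : Function.Injective f) (s : A) (hs : IsUnit (f s)) :
    ∃ C : Subalgebra k Q, (∀ q, q ∈ C ↔ ∃ N : ℕ, q * f s ^ N ∈ Set.range f) ∧
      ∀ C' : Subalgebra k Q, C' = C → 
      ∃ u : A →ₐ[k] C', (∀ a, (u a : Q) = f a) ∧ IsOpenImmersion (Spec.map (CommRingCat.ofHom u.toRingHom)) := by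
  let C : Subalgebra k Q :=
    { carrier := {q | ∃ N : ℕ, q * f s ^ N ∈ Set.range f}
      mul_mem' := by
        rintro a b ⟨N, x, hx⟩ ⟨M, y, hy⟩
        exact ⟨N + M, x * y, by rw [map_mul, hx, hy]; ring⟩
      add_mem' := by
        rintro a b ⟨N, x, hx⟩ ⟨M, y, hy⟩
        exact ⟨N + M, x * s ^ M + y * s ^ N, by rw [map_add, map_mul, map_mul, hx, hy, map_pow, map_pow]; ring⟩
      algebraMap_mem' := fun r => ⟨0, algebraMap k A r, by simp⟩ }
  refine ⟨C, fun q => Iff.rfl, ?_⟩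
  rintro _ rfl
  let u : A →ₐ[k] C := f.codRestrict C (fun a => ⟨0, a, by simp⟩)
  refine ⟨u, fun a => rfl, ?_⟩
  let := u.toRingHom.toAlgebra
  have : IsLocalization.Away s C := by
    refine IsLocalization.Away.mk s ?_ ?_ ?_
    · obtain ⟨w, hw⟩ := hs.exists_right_inv
      have hwC : w ∈ C := ⟨1, 1, by rw [map_one, pow_one, mul_comm, hw]⟩
      exact IsUnit.of_mul_eq_one (⟨w, hwC⟩ : C) (Subtype.ext hw)
    · rintro ⟨q, N, a, ha⟩
      exact ⟨N, a, Subtype.ext ha.symm⟩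
    · intro a b hab
      have := congrArg Subtype.val hab
      exact ⟨0, by rw [hf this]⟩
  exact IsOpenImmersion.of_isLocalization s

theorem common_denom {k A B Q : Type} [Field k] [CommRing A] [CommRing B] [CommRing Q]
    [Algebra k A] [Algebra k B] [Algebra k Q] [Algebra.FiniteType k B] (f : A →ₐ[k] Q) (g : B →ₐ[k] Q)
    (hA : ∀ q, ∃ a s, IsUnit (f s) ∧ q * f s = f a) :
    ∃ s, IsUnit (f s) ∧ ∀ b, ∃ N : ℕ, g b * f s ^ N ∈ Set.range f := by
  obtain ⟨S, hS⟩ := Algebra.FiniteType.out (R := k) (A := B)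
  have key : ∃ s, IsUnit (f s) ∧ ∀ b ∈ S, ∃ a, g b * f s = f a := by
    clear hS
    classical
    induction S using Finset.induction_on with
    | empty => exact ⟨1, by simp, by simp⟩
    | insert x S hx ih =>
      obtain ⟨s, hs, h⟩ := ih
      obtain ⟨a, t, ht, hat⟩ := hA (g x)
      refine ⟨s * t, by rw [map_mul]; exact hs.mul ht, ?_⟩
      intro b hb
      rw [Finset.mem_insert] at hb
      rcases hb with rfl | hb
      · exact ⟨s * a, by rw [map_mul, map_mul, ← hat]; ring⟩
      · obtain ⟨a', h'⟩ := h b hb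
        exact ⟨a' * t, by rw [map_mul, map_mul, ← h']; ring⟩
  obtain ⟨s, hs, h⟩ := key
  refine ⟨s, hs, fun b => ?_⟩
  have hb : b ∈ Algebra.adjoin k (S : Set B) := by rw [hS]; trivial
  induction hb using Algebra.adjoin_induction with
  | mem x hx => 
    obtain ⟨a, ha⟩ := h x hx
    exact ⟨1, a, by rw [pow_one, ha]⟩
  | algebraMap r => exact ⟨0, algebraMap k A r, by simp⟩
  | add x y _ _ hx hy =>
    obtain ⟨N, x, hx⟩ := hx
    obtain ⟨M, y, hy⟩ := hy
    exact ⟨N + M, x * s ^ M + y * s ^ N, by rw [map_add, map_mul, map_mul, hx, hy, map_pow, map_pow, map_add]; ring⟩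
  | mul x y _ _ hx hy =>
    obtain ⟨N, x, hx⟩ := hx
    obtain ⟨M, y, hy⟩ := hy
    exact ⟨N + M, x * y, by rw [map_mul, hx, hy, map_mul]; ring⟩

theorem locS_le {k A B Q : Type} [Field k] [CommRing A] [CommRing B] [CommRing Q]
    [Algebra k A] [Algebra k B] [Algebra k Q] (f : A →ₐ[k] Q) (g : B →ₐ[k] Q)
    (s1 s2 : A) (t1 t2 : B) (N M : ℕ)
    (h : ∀ b, ∃ N : ℕ, g b * f s1 ^ N ∈ Set.range f)
    (hs1 : IsUnit (f s1)) (ht1 : IsUnit (g t1))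
    (hs2 : f s2 = g t1 * f s1 ^ M) (ht2 : g t2 = f s1 * g t1 ^ N)
    (C : Subalgebra k Q) (hC : ∀ q, q ∈ C ↔ ∃ N : ℕ, q * f (s1 * s2) ^ N ∈ Set.range f)
    (D : Subalgebra k Q) (hD : ∀ q, q ∈ D ↔ ∃ N : ℕ, q * g (t1 * t2) ^ N ∈ Set.range g) : D ≤ C := by
  have hfC : ∀ a, f a ∈ C := fun a => (hC _).mpr ⟨0, a, by simp⟩
  obtain ⟨i, hi⟩ := hs1.exists_right_inv
  obtain ⟨j, hj⟩ := ht1.exists_right_inv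
  have hiC : i ∈ C := (hC _).mpr ⟨1, s2, by rw [map_mul, pow_one]; linear_combination (-f s2) * hi⟩
  have hs2' : IsUnit (f s2) := by rw [hs2]; exact ht1.mul (hs1.pow _)
  obtain ⟨l, hl⟩ := hs2'.exists_right_inv
  have hlC : l ∈ C := (hC _).mpr ⟨1, s1, by rw [map_mul, pow_one]; linear_combination (-f s1) * hl⟩
  have hjC : j ∈ C := by
    have : j = f s1 ^ M * l := by
      have h1 : g t1 * (f s1 ^ M * l) = 1 := by rw [← hl, hs2]; ring
      calc j = j * (g t1 * (f s1 ^ M * l)) := by rw [h1, mul_one]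
        _ = (g t1 * j) * (f s1 ^ M * l) := by ring
        _ = _ := by rw [hj, one_mul]
    rw [this]
    exact C.mul_mem (C.pow_mem (hfC _) _) hlC
  have hgC : ∀ b, g b ∈ C := by
    intro b
    obtain ⟨N, a, ha⟩ := h b
    have : g b = f a * i ^ N := by
      rw [ha, mul_assoc, ← mul_pow, hi, one_pow, mul_one]
    rw [this]
    exact C.mul_mem (hfC _) (C.pow_mem hiC _)
  intro q hq
  obtain ⟨L, b, hb⟩ := (hD q).mp hq
  have : q = g b * (i * j ^ (N + 1)) ^ L := by
    rw [hb, mul_assoc, ← mul_pow, map_mul, ht2,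
      show g t1 * (f s1 * g t1 ^ N) * (i * j ^ (N + 1)) = (f s1 * i) * (g t1 * j) ^ (N + 1) by ring,
      hi, hj]
    simp
  rw [this]
  exact C.mul_mem (hgC _) (C.pow_mem (C.mul_mem hiC (C.pow_mem hjC _)) _)

open AlgebraicGeometry in
theorem spread {k A B Q : Type} [Field k] [CommRing A] [CommRing B] [CommRing Q]
    [Algebra k A] [Algebra k B] [Algebra k Q] [Algebra.FiniteType k A] [Algebra.FiniteType k B]
    (f : A →ₐ[k] Q) (g : B →ₐ[k] Q) (hf : Function.Injective f) (hg : Function.Injective g)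
    (hA : ∀ q, ∃ a s, IsUnit (f s) ∧ q * f s = f a)
    (hB : ∀ q, ∃ a s, IsUnit (g s) ∧ q * g s = g a) :
    ∃ (C : Subalgebra k Q) (u : A →ₐ[k] C) (v : B →ₐ[k] C), Function.Injective u ∧ Function.Injective v ∧
      IsOpenImmersion (Spec.map (CommRingCat.ofHom u.toRingHom)) ∧
      IsOpenImmersion (Spec.map (CommRingCat.ofHom v.toRingHom)) := by
  obtain ⟨s1, hs1, h1⟩ := common_denom f g hA
  obtain ⟨t1, ht1, h2⟩ := common_denom g f hB
  obtain ⟨M, s2, hs2⟩ := h1 t1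
  obtain ⟨N, t2, ht2⟩ := h2 s1
  have hs2' : IsUnit (f s2) := by rw [hs2]; exact ht1.mul (hs1.pow _)
  have ht2' : IsUnit (g t2) := by rw [ht2]; exact hs1.mul (ht1.pow _)
  obtain ⟨C, hC, hC'⟩ := locS_exists f hf (s1 * s2) (by rw [map_mul]; exact hs1.mul hs2')
  obtain ⟨D, hD, hD'⟩ := locS_exists g hg (t1 * t2) (by rw [map_mul]; exact ht1.mul ht2')
  have hCD : C = D := le_antisymm (locS_le g f t1 t2 s1 s2 M N h2 ht1 hs1 ht2 hs2 D hD C hC)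
    (locS_le f g s1 s2 t1 t2 N M h1 hs1 ht1 hs2 ht2 C hC D hD)
  obtain ⟨u, hu, hu'⟩ := hC' C rfl
  obtain ⟨v, hv, hv'⟩ := hD' C hCD
  refine ⟨C, u, v, ?_, ?_, hu', hv'⟩
  · intro a b hab
    apply hf; rw [← hu, ← hu, hab]
  · intro a b hab
    apply hg; rw [← hv, ← hv, hab]
open Polynomial in
theorem smooth_adjoinRoot {R : Type} [CommRing R] (g : R[X]) (hg : g.Separable) :
    Algebra.Smooth R (AdjoinRoot g) := by
  have hfp : Algebra.FinitePresentation R (AdjoinRoot g) :=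
    Algebra.FinitePresentation.quotient (A := R[X]) (Submodule.fg_span (by simp))
  have hfs : Algebra.FormallySmooth R (AdjoinRoot g) := by
    apply Algebra.FormallySmooth.of_comp_surjective
    intro S _ _ I hI f
    obtain ⟨x, hx⟩ := Ideal.Quotient.mk_surjective (f (AdjoinRoot.root g))
    have hf : aeval x g ∈ I := by
      rw [← Ideal.Quotient.eq_zero_iff_mem, ← Ideal.Quotient.mkₐ_eq_mk R, ← aeval_algHom_apply,
        Ideal.Quotient.mkₐ_eq_mk, hx, aeval_algHom_apply, AdjoinRoot.aeval_eq, AdjoinRoot.mk_self,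
        map_zero]
    obtain ⟨u, v, huv⟩ := hg
    have e := congrArg (aeval x) huv
    simp only [map_add, map_mul, map_one] at e
    have h2 : aeval x g * aeval x g = 0 := by
      rw [← pow_two]; exact hI.le (Ideal.pow_mem_pow hf 2)
    have h3 : aeval (x + aeval x g * -(aeval x v)) g = 0 := by
      rw [Polynomial.aeval_add_of_sq_eq_zero _ _ _ (by linear_combination (aeval x v)^2 * h2)]
      linear_combination (- aeval x g) * e + aeval x u * h2
    refine ⟨AdjoinRoot.liftAlgHom g (Algebra.ofId R S) (x + aeval x g * -(aeval x v)) ?_, ?_⟩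
    · exact h3
    · apply AdjoinRoot.algHom_ext
      rw [AlgHom.comp_apply, ← hx, Ideal.Quotient.mkₐ_eq_mk]
      refine (congrArg _ (AdjoinRoot.liftAlgHom_root _ _ _ h3)).trans ?_
      rw [map_add, Ideal.Quotient.eq_zero_iff_mem.mpr (I.mul_mem_right _ hf), add_zero]
  exact {}

open Polynomial in
theorem smooth_hyp {k : Type} [Field k] (n : ℕ) (g : (MvPolynomial (Fin n) k)[X]) (hg : g.Separable) :
    Algebra.Smooth k (MvPolynomial (Fin (n+1)) k ⧸ Ideal.span {(MvPolynomial.finSuccEquiv k n).symm g}) := by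
  have := smooth_adjoinRoot g hg
  have : Algebra.Smooth k (MvPolynomial (Fin n) k) := ⟨inferInstance, inferInstance⟩
  have : Algebra.Smooth k (AdjoinRoot g) := Algebra.Smooth.comp k (MvPolynomial (Fin n) k) (AdjoinRoot g)
  refine Algebra.Smooth.of_equiv (A := AdjoinRoot g) ?_
  refine Ideal.quotientEquivAlg (Ideal.span {g}) _ (MvPolynomial.finSuccEquiv k n).symm ?_
  rw [Ideal.map_span, Set.image_singleton]
  rfl
open Polynomial in
theorem alg_main {k : Type} [Field k] [PerfectField k] (n : ℕ) (hnk : 0 < n ∨ Infinite k) {ι : Type} [Fintype ι]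
    (K : ι → Type) [∀ i, Field (K i)] [∀ i, Algebra k (K i)] [∀ i, Algebra.EssFiniteType k (K i)]
    (htr : ∀ i, Algebra.trdeg k (K i) = n) :
    ∃ g : (MvPolynomial (Fin n) k)[X], g.Separable ∧
      ∃ θ : (MvPolynomial (Fin n) k)[X] →ₐ[k] (∀ i, K i), (∀ q, θ q = 0 ↔ g ∣ q) ∧
        ∀ q, ∃ b s, IsUnit (θ s) ∧ q * θ s = θ b := by
  set R := MvPolynomial (Fin n) k with hR
  set F := FractionRing R with hF
  have hinj : Function.Injective (algebraMap R F) := IsFractionRing.injective R F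
  have : Infinite R := by
    rcases hnk with h | h
    · have : Nonempty (Fin n) := ⟨⟨0, h⟩⟩
      infer_instance
    · infer_instance
  have : Infinite F := Infinite.of_injective _ hinj
  choose ρ α p h1 h2 h3 h4 using fun i => sepgen (k := k) (K := K i) n (htr i)
  obtain ⟨β, P, hP, hP0, hker, hsurj⟩ := combine (F := F) K (fun i => (ρ i).toRingHom)
    (fun i => ⟨α i, p i, h1 i, h2 i, h3 i, h4 i⟩)
  obtain ⟨g, c, d, hc, hd, hg0, hgs, hgm⟩ := exists_hyp (R := R) P hP hP0
  refine ⟨g, hgs, ?_⟩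
  have hρ : ∀ i (x : F), x ≠ 0 → ρ i x ≠ 0 := fun i x hx => (map_ne_zero (ρ i)).mpr hx
  let f : R →ₐ[k] (∀ i, K i) := Pi.algHom k K (fun i => (ρ i).comp (IsScalarTower.toAlgHom k R F))
  let y : ∀ i, K i := fun i => β i / ρ i c
  let θ : R[X] →ₐ[k] (∀ i, K i) := Polynomial.eval₂AlgHom f y (fun a => Commute.all _ _)
  have hθ : ∀ q i, θ q i = (q.map (algebraMap R F)).eval₂ (ρ i).toRingHom (y i) := by
    intro q i
    change (Pi.evalRingHom K i) (eval₂ (f : R →+* _) y q) = _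
    rw [hom_eval₂, eval₂_map]
    rfl
  have hcomp : ∀ (w : F[X]) i, (w.comp (C c * X)).eval₂ (ρ i).toRingHom (y i) = w.eval₂ (ρ i).toRingHom (β i) := by
    intro w i
    rw [eval₂_comp]
    congr 1
    rw [eval₂_mul, eval₂_C, eval₂_X]
    exact mul_div_cancel₀ _ (hρ i c hc)
  have hcc : ∀ w : F[X], (w.comp (C c⁻¹ * X)).comp (C c * X) = w := by
    intro w
    rw [comp_assoc, mul_comp, C_comp, X_comp, ← mul_assoc, ← C_mul, inv_mul_cancel₀ hc, C_1, one_mul, comp_X]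
  have hcc' : ∀ w : F[X], (w.comp (C c * X)).comp (C c⁻¹ * X) = w := by
    intro w
    rw [comp_assoc, mul_comp, C_comp, X_comp, ← mul_assoc, ← C_mul, mul_inv_cancel₀ hc, C_1, one_mul, comp_X]
  refine ⟨θ, ?_, ?_⟩
  · intro q
    have e1 : θ q = 0 ↔ P ∣ (q.map (algebraMap R F)).comp (C c⁻¹ * X) := by
      rw [← hker, funext_iff]
      refine forall_congr' fun i => ?_
      rw [hθ, ← hcomp, hcc]; rfl
    rw [e1]
    constructor
    · intro h
      apply dvd_of_map_dvd (F := F) _ _ hg0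
      rw [hgm]
      obtain ⟨w, hw⟩ := h
      refine ⟨C d⁻¹ * w.comp (C c * X), ?_⟩
      rw [← hcc (q.map _), hw, mul_comp]
      have : (C d : F[X]) * C d⁻¹ = 1 := by rw [← C_mul, mul_inv_cancel₀ hd, C_1]
      linear_combination (- P.comp (C c * X) * w.comp (C c * X)) * this
    · rintro ⟨w, rfl⟩
      rw [Polynomial.map_mul, hgm, mul_comp, mul_comp, hcc']
      exact (Dvd.intro_left _ rfl).mul_right _
  · intro z
    obtain ⟨w, hw⟩ := hsurj z
    obtain ⟨s, hs⟩ := IsLocalization.integerNormalization_map_to_map (nonZeroDivisors R) (w.comp (C c * X))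
    have hsne : algebraMap R F s ≠ 0 := (map_ne_zero_iff _ hinj).mpr (nonZeroDivisors.ne_zero s.2)
    have e : ∀ i, θ (C (s : R)) i = ρ i (algebraMap R F s) := by
      intro i
      rw [hθ, map_C, eval₂_C]; rfl
    refine ⟨IsLocalization.integerNormalization (nonZeroDivisors R) (w.comp (C c * X)), C (s : R), ?_, funext fun i => ?_⟩
    rotate_left 1
    · rw [Pi.mul_apply, e, hθ _ i, hs, ← hw i, ← hcomp,
        show ((s : R) • w.comp (C c * X)) = C (algebraMap R F s) * w.comp (C c * X) by
          ext m; rw [coeff_smul, coeff_C_mul, Algebra.smul_def],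
        eval₂_mul, eval₂_C, mul_comm]
      rfl
    · rw [Pi.isUnit_iff]
      intro i
      rw [e]
      exact (hρ i _ hsne).isUnit

open Polynomial in
theorem alg_main2 {k : Type} [Field k] [PerfectField k] (n : ℕ) (hnk : 0 < n ∨ Infinite k) {ι : Type} [Fintype ι]
    (K : ι → Type) [∀ i, Field (K i)] [∀ i, Algebra k (K i)] [∀ i, Algebra.EssFiniteType k (K i)]
    (htr : ∀ i, Algebra.trdeg k (K i) = n) :
    ∃ g : MvPolynomial (Fin (n+1)) k, Algebra.Smooth k (MvPolynomial (Fin (n+1)) k ⧸ Ideal.span {g}) ∧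
      ∃ θ : (MvPolynomial (Fin (n+1)) k ⧸ Ideal.span {g}) →ₐ[k] (∀ i, K i), Function.Injective θ ∧
        ∀ q, ∃ b s, IsUnit (θ s) ∧ q * θ s = θ b := by
  obtain ⟨g, hg, θ, hθ, hs⟩ := alg_main n hnk K htr
  let e := MvPolynomial.finSuccEquiv k n
  refine ⟨e.symm g, smooth_hyp n g hg, ?_⟩
  have hz : ∀ a, (θ.comp e.toAlgHom) a = 0 ↔ a ∈ Ideal.span {e.symm g} := by
    intro a
    rw [Ideal.mem_span_singleton, AlgHom.comp_apply, hθ]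
    constructor
    · rintro ⟨w, hw⟩
      refine ⟨e.symm w, ?_⟩
      apply e.injective
      rw [map_mul, e.apply_symm_apply, e.apply_symm_apply]
      exact hw
    · rintro ⟨w, rfl⟩
      refine ⟨e w, ?_⟩
      change e _ = _
      rw [map_mul, e.apply_symm_apply]
  refine ⟨Ideal.Quotient.liftₐ _ (θ.comp e.toAlgHom) (fun a ha => (hz a).mpr ha), ?_, ?_⟩
  · rw [injective_iff_map_eq_zero]
    intro a ha
    obtain ⟨a, rfl⟩ := Ideal.Quotient.mk_surjective a
    exact Ideal.Quotient.eq_zero_iff_mem.mpr ((hz a).mp ha)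
  · intro q
    obtain ⟨b, s, h1, h2⟩ := hs q
    have key : ∀ b, (Ideal.Quotient.liftₐ _ (θ.comp e.toAlgHom) (fun a ha => (hz a).mpr ha))
        (Ideal.Quotient.mk (Ideal.span {e.symm g}) (e.symm b)) = θ b := by
      intro b
      change θ (e (e.symm b)) = _
      rw [e.apply_symm_apply]
    refine ⟨Ideal.Quotient.mk _ (e.symm b), Ideal.Quotient.mk _ (e.symm s), ?_, ?_⟩
    · rw [key]; exact h1
    · rw [key, key]; exact h2

open TopologicalSpace Topology in
theorem dim_open {T : Type} [TopologicalSpace T] (n : ℕ) (h : topologicalKrullDim T = (n : ℕ∞)) :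
    ∃ x : T, ∀ (W : Type) [TopologicalSpace W] (i : W → T), IsOpenEmbedding i → x ∈ Set.range i →
      topologicalKrullDim W = (n : ℕ∞) := by
  have h' : (n : WithBot ℕ∞) ≤ Order.krullDim (IrreducibleCloseds T) := h.ge
  obtain ⟨p, hp⟩ := Order.le_krullDim_iff.mp h'
  obtain ⟨x, hx⟩ := p.head.isIrreducible.nonempty
  refine ⟨x, fun W _ i hi hxi => le_antisymm (h ▸ hi.isInducing.topologicalKrullDim_le) ?_⟩
  have hmem : ∀ j, (i ⁻¹' (p j : Set T)).Nonempty := by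
    intro j
    obtain ⟨w, hw⟩ := hxi
    refine ⟨w, ?_⟩
    have : p.head ≤ p j := p.monotone (Fin.zero_le j)
    change i w ∈ (p j : Set T)
    rw [hw]
    exact this hx
  let e := IrreducibleCloseds.orderIsoOfIsOpenEmbedding i hi
  let q : LTSeries (IrreducibleCloseds W) :=
    { length := p.length
      toFun := fun j => e.symm ⟨p j, hmem j⟩
      step := fun j => e.symm.strictMono (p.step j) }
  exact Order.le_krullDim_iff.mpr ⟨q, hp⟩

open PrimeSpectrum in
theorem dim_zeroLocus {R : Type} [CommRing R] (p : Ideal R) :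
    topologicalKrullDim (zeroLocus (p : Set R)) = ringKrullDim (R ⧸ p) := by
  rw [← topologicalKrullDim_eq_ringKrullDim]
  have hc := PrimeSpectrum.isClosedEmbedding_comap_of_surjective _ (Ideal.Quotient.mk p) Ideal.Quotient.mk_surjective
  have hr : Set.range (comap (Ideal.Quotient.mk p)) = zeroLocus (p : Set R) := by
    rw [range_comap_of_surjective _ _ Ideal.Quotient.mk_surjective, Ideal.mk_ker]
  rw [← hr]
  exact (hc.isEmbedding.toHomeomorph.symm.isHomeomorph.topologicalKrullDim_eq)

theorem ring_step {k R : Type} [Field k] [CommRing R] [_root_.IsReduced R] [Algebra k R] [Algebra.FiniteType k R]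
    (p : Ideal R) (hp : p ∈ minimalPrimes R) (n : ℕ) (hdim : ringKrullDim (R ⧸ p) = n) :
    ∃ f : R, f ∉ p ∧ IsDomain (Localization.Away f) ∧
      Algebra.trdeg k (FractionRing (Localization.Away f)) = n := by
  have hpp : p.IsPrime := hp.1.1
  have : IsNoetherianRing R := Algebra.FiniteType.isNoetherianRing k R
  have hfield : IsField (Localization.AtPrime p) := by
    have : _root_.IsReduced (Localization.AtPrime p) := inferInstanceAs (_root_.IsReduced (Localization p.primeCompl))
    rw [← PrimeSpectrum.subsingleton_iff_isField_of_isReduced]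
    exact IsLocalization.subsingleton_primeSpectrum_of_mem_minimalPrimes p hp _
  have hkill : ∀ x ∈ p, ∃ f, f ∉ p ∧ f * x = 0 := by
    intro x hx
    have h0 : algebraMap R (Localization.AtPrime p) x = 0 := by
      by_contra hne
      obtain ⟨y, hy⟩ := hfield.mul_inv_cancel hne
      exact (IsLocalization.AtPrime.isUnit_to_map_iff (Localization.AtPrime p) p x).mp
        (IsUnit.of_mul_eq_one y hy) hx
    obtain ⟨f, hf⟩ := (IsLocalization.map_eq_zero_iff p.primeCompl _ x).mp h0
    exact ⟨f, f.2, hf⟩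
  have hkill2 : ∃ f, f ∉ p ∧ ∀ x ∈ p, f * x = 0 := by
    obtain ⟨S, hS⟩ := (isNoetherianRing_iff_ideal_fg R).mp this p
    have hSp : ∀ x ∈ S, x ∈ p := fun x hx => hS ▸ Ideal.subset_span hx
    have : ∃ f, f ∉ p ∧ ∀ x ∈ S, f * x = 0 := by
      clear hS
      classical
      induction S using Finset.induction_on with
      | empty => exact ⟨1, hpp.one_notMem, by simp⟩
      | insert x S hx ih =>
        obtain ⟨f, hf, h⟩ := ih (fun y hy => hSp y (Finset.mem_insert_of_mem hy))
        obtain ⟨g, hg, h'⟩ := hkill x (hSp x (Finset.mem_insert_self _ _))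
        refine ⟨f * g, fun hfg => (hpp.mem_or_mem hfg).elim hf hg, ?_⟩
        intro y hy
        rcases Finset.mem_insert.mp hy with rfl | hy
        · rw [mul_assoc, h', mul_zero]
        · rw [mul_right_comm, h y hy, zero_mul]
    obtain ⟨f, hf, h⟩ := this
    refine ⟨f, hf, fun x hx => ?_⟩
    rw [← hS] at hx
    induction hx using Submodule.span_induction with
    | mem x hx => exact h x hx
    | zero => simp
    | add x y _ _ hx hy => rw [mul_add, hx, hy, add_zero]
    | smul a x _ hx => rw [smul_eq_mul, mul_left_comm, hx, mul_zero]
  obtain ⟨f, hf, hfp⟩ := hkill2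
  let L := Localization.Away f
  have hlift : ∀ x ∈ p, algebraMap R L x = 0 := fun x hx =>
    (IsLocalization.map_eq_zero_iff (Submonoid.powers f) L x).mpr ⟨⟨f, 1, pow_one f⟩, hfp x hx⟩
  let ψ : R ⧸ p →ₐ[k] L := Ideal.Quotient.liftₐ p (IsScalarTower.toAlgHom k R L) hlift
  let := ψ.toRingHom.toAlgebra
  have hψ : ∀ a : R, algebraMap (R ⧸ p) L (Ideal.Quotient.mk p a) = algebraMap R L a := fun a => rfl
  have : IsScalarTower k (R ⧸ p) L := IsScalarTower.of_algebraMap_eq fun x => (ψ.commutes x).symm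
  have hloc : IsLocalization.Away (Ideal.Quotient.mk p f) L := by
    refine IsLocalization.Away.mk _ ?_ ?_ ?_
    · rw [hψ]; exact IsLocalization.Away.algebraMap_isUnit f
    · intro s
      obtain ⟨N, a, h⟩ := IsLocalization.Away.surj f s
      exact ⟨N, Ideal.Quotient.mk p a, by rw [hψ, hψ, h]⟩
    · intro a b hab
      obtain ⟨a, rfl⟩ := Ideal.Quotient.mk_surjective a
      obtain ⟨b, rfl⟩ := Ideal.Quotient.mk_surjective b
      rw [hψ, hψ] at hab
      obtain ⟨N, h⟩ := IsLocalization.Away.exists_of_eq f hab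
      exact ⟨N, by rw [← map_pow, ← map_mul, h, map_mul]⟩
  have hfne : Ideal.Quotient.mk p f ≠ 0 := fun h => hf (Ideal.Quotient.eq_zero_iff_mem.mp h)
  have hdom : IsDomain L := IsLocalization.Away.isDomain _ hfne
  refine ⟨f, hf, hdom, ?_⟩
  have : IsFractionRing (R ⧸ p) (FractionRing L) := by
    have h1 : Function.Injective (algebraMap (R ⧸ p) L) :=
      IsLocalization.injective L (powers_le_nonZeroDivisors_of_noZeroDivisors hfne)
    have h2 : Function.Injective (algebraMap L (FractionRing L)) := IsFractionRing.injective L _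
    have h3 : Function.Injective (algebraMap (R ⧸ p) (FractionRing L)) := by
      rw [IsScalarTower.algebraMap_eq (R ⧸ p) L (FractionRing L)]
      exact h2.comp h1
    have : FaithfulSMul (R ⧸ p) (FractionRing L) := (faithfulSMul_iff_algebraMap_injective _ _).mpr h3
    refine IsFractionRing.of_field _ _ fun z => ?_
    obtain ⟨x, y, hy, rfl⟩ := IsFractionRing.div_surjective (A := L) z
    obtain ⟨N, a, ha⟩ := IsLocalization.Away.surj (Ideal.Quotient.mk p f) x
    obtain ⟨M, b, hb⟩ := IsLocalization.Away.surj (Ideal.Quotient.mk p f) y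
    refine ⟨a * (Ideal.Quotient.mk p f) ^ M, b * (Ideal.Quotient.mk p f) ^ N, ?_⟩
    have hy' : algebraMap L (FractionRing L) y ≠ 0 := (map_ne_zero_iff _ h2).mpr (nonZeroDivisors.ne_zero hy)
    have hf' : algebraMap L (FractionRing L) (algebraMap (R ⧸ p) L (Ideal.Quotient.mk p f)) ≠ 0 :=
      (map_ne_zero_iff _ h2).mpr ((map_ne_zero_iff _ h1).mpr hfne)
    rw [IsScalarTower.algebraMap_apply (R ⧸ p) L (FractionRing L),
      IsScalarTower.algebraMap_apply (R ⧸ p) L (FractionRing L)]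
    simp only [map_mul, map_pow, ← ha, ← hb]
    field_simp
  exact trdeg_of_dim (R := R ⧸ p) n hdim

open AlgebraicGeometry CategoryTheory in
theorem comp_step {k : Type} [Field k] (n : ℕ) (Z : Scheme.{0}) [IsReduced Z]
    (φ : Z ⟶ Spec (CommRingCat.of k)) [LocallyOfFiniteType φ]
    (T : Set Z) (hT : T ∈ irreducibleComponents Z) (hdim : topologicalKrullDim T = (n : ℕ∞)) :
    ∃ (A : Type) (_ : CommRing A) (_ : IsDomain A) (_ : Algebra k A), Algebra.FiniteType k A ∧
      Algebra.trdeg k (FractionRing A) = n ∧ ∃ j : Spec (CommRingCat.of A) ⟶ Z, IsOpenImmersion j ∧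
        closure (Set.range j) = T ∧ j ≫ φ = Spec.map (CommRingCat.ofHom (algebraMap k A)) := by
  obtain ⟨x, hx⟩ := dim_open n hdim
  obtain ⟨R, j0, hj0, hxj⟩ : ∃ (R : CommRingCat.{0}) (j0 : Spec R ⟶ Z), IsOpenImmersion j0 ∧ (x : Z) ∈ Set.range j0 :=
    ⟨_, Z.affineOpenCover.f (Z.affineOpenCover.idx x), inferInstance, Z.affineOpenCover.covers x⟩
  obtain ⟨ψ, hψ⟩ := Spec.map_surjective (j0 ≫ φ)
  have hft : LocallyOfFiniteType (Spec.map ψ) := by rw [hψ]; infer_instance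
  have hft' : ψ.hom.FiniteType := (HasRingHomProperty.Spec_iff (P := @LocallyOfFiniteType)).mp hft
  algebraize [ψ.hom]
  have : IsReduced (Spec R) := isReduced_of_isOpenImmersion j0
  have : _root_.IsReduced R := (affine_isReduced_iff R).mp inferInstance
  let T' : Set (PrimeSpectrum R) := j0 ⁻¹' T
  have hT' : T' ∈ irreducibleComponents (PrimeSpectrum R) :=
    preimage_mem_irreducibleComponents hT j0.isOpenEmbedding ⟨x, x.2, hxj⟩
  have hT'c : IsClosed T' := isClosed_of_mem_irreducibleComponents _ hT'
  have hpm := PrimeSpectrum.vanishingIdeal_mem_minimalPrimes.mpr (hT'c.closure_eq.symm ▸ hT')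
  set p := PrimeSpectrum.vanishingIdeal T' with hp
  have hzl : PrimeSpectrum.zeroLocus (p : Set R) = T' := by
    rw [hp, PrimeSpectrum.zeroLocus_vanishingIdeal_eq_closure, hT'c.closure_eq]
  have hd : ringKrullDim (R ⧸ p) = n := by
    rw [← dim_zeroLocus, hzl]
    obtain ⟨y, hy⟩ := hxj
    exact hx T' (T.restrictPreimage j0) (Set.restrictPreimage_isOpenEmbedding _ j0.isOpenEmbedding)
      ⟨⟨y, by change j0 y ∈ T; rw [hy]; exact x.2⟩, Subtype.ext hy⟩
  obtain ⟨f, hf, hdom, htr⟩ := ring_step (k := k) p hpm n hd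
  refine ⟨Localization.Away f, inferInstance, hdom, inferInstance, ?_, htr,
    Spec.map (CommRingCat.ofHom (algebraMap R (Localization.Away f))) ≫ j0, ?_, ?_, ?_⟩
  · have : Algebra.FiniteType R (Localization.Away f) := inferInstance
    exact Algebra.FiniteType.trans (S := R) inferInstance inferInstance
  · have : IsOpenImmersion (Spec.map (CommRingCat.ofHom (algebraMap R (Localization.Away f)))) :=
      IsOpenImmersion.of_isLocalization f
    infer_instance
  · have hoi : IsOpenImmersion (Spec.map (CommRingCat.ofHom (algebraMap R (Localization.Away f)))) :=
      IsOpenImmersion.of_isLocalization f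
    generalize hj : Spec.map (CommRingCat.ofHom (algebraMap R (Localization.Away f))) ≫ j0 = j
    have hjo : IsOpenImmersion j := by rw [← hj]; infer_instance
    have hirr : IsIrreducible (Set.range j) := by
      have : IrreducibleSpace (PrimeSpectrum (Localization.Away f)) := inferInstance
      rw [← Set.image_univ]
      exact (IrreducibleSpace.isIrreducible_univ (PrimeSpectrum (Localization.Away f))).image _
        j.continuous.continuousOn
    have hpp : p.IsPrime := hpm.1.1
    have hmeet : (T ∩ Set.range j).Nonempty := by
      have h1 : (⟨p, hpp⟩ : PrimeSpectrum R) ∈ T' := by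
        rw [← hzl]; exact fun _ h => h
      have h2 : (⟨p, hpp⟩ : PrimeSpectrum R) ∈ Set.range (PrimeSpectrum.comap (algebraMap R (Localization.Away f))) := by
        rw [PrimeSpectrum.localization_away_comap_range _ f]
        exact hf
      obtain ⟨q, hq⟩ := h2
      refine ⟨j0 (⟨p, hpp⟩ : PrimeSpectrum R), h1, q, ?_⟩
      rw [← hj]
      exact congrArg j0 hq
    have hsub : T ⊆ closure (Set.range j) :=
      (subset_closure_inter_of_isPreirreducible_of_isOpen hT.1.2 j.isOpenEmbedding.isOpen_range hmeet).trans
        (closure_mono Set.inter_subset_right)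
    exact Set.Subset.antisymm (hT.2 hirr.closure hsub) hsub
  · rw [Category.assoc, ← hψ, ← Spec.map_comp]
    rfl

open AlgebraicGeometry CategoryTheory in
theorem red_step {X Z : Scheme.{0}} (q : X ⟶ Z) [Flat q] [Surjective q] [IsReduced X] : IsReduced Z := by
  apply +allowSynthFailures isReduced_of_isReduced_stalk
  intro z
  obtain ⟨x, rfl⟩ := q.surjective z
  have hfl := Flat.stalkMap q x
  algebraize [(q.stalkMap x).hom]
  have : IsLocalHom (algebraMap (Z.presheaf.stalk (q x)) (X.presheaf.stalk x)) :=
    inferInstanceAs (IsLocalHom (q.stalkMap x).hom)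
  have : Module.FaithfullyFlat (Z.presheaf.stalk (q x)) (X.presheaf.stalk x) :=
    Module.FaithfullyFlat.of_flat_of_isLocalHom
  exact isReduced_of_injective (algebraMap (Z.presheaf.stalk (q x)) (X.presheaf.stalk x))
    (FaithfulSMul.algebraMap_injective _ _)

open AlgebraicGeometry CategoryTheory in
theorem red_step2 {k K : Type} [Field k] [Field K] [Algebra k K] {Z : Scheme.{0}} (φ : Z ⟶ Spec (CommRingCat.of k))
    (h : IsReduced (Limits.pullback φ (Spec.map (CommRingCat.ofHom (algebraMap k K))))) : IsReduced Z := by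
  have : Flat (Spec.map (CommRingCat.ofHom (algebraMap k K))) ∧ Surjective (Spec.map (CommRingCat.ofHom (algebraMap k K))) := by
    rw [flat_and_surjective_SpecMap_iff]
    exact (RingHom.faithfullyFlat_algebraMap_iff).mpr inferInstance
  obtain ⟨_, _⟩ := this
  exact red_step (Limits.pullback.fst φ (Spec.map (CommRingCat.ofHom (algebraMap k K))))

open AlgebraicGeometry CategoryTheory in
theorem geom_step {k : Type} [Field k] (n : ℕ) (Z : Scheme.{0}) [IsReduced Z]
    (φ : Z ⟶ Spec (CommRingCat.of k)) [LocallyOfFiniteType φ] [QuasiCompact φ]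
    (hpure : ∀ T ∈ irreducibleComponents Z, topologicalKrullDim T = (n : ℕ∞)) :
    ∃ (ι : Type) (_ : Fintype ι) (A : ι → Type) (_ : ∀ i, CommRing (A i)) (_ : ∀ i, IsDomain (A i))
      (_ : ∀ i, Algebra k (A i)), (∀ i, Algebra.FiniteType k (A i)) ∧
      (∀ i, Algebra.trdeg k (FractionRing (A i)) = n) ∧
      ∃ j : Spec (CommRingCat.of (∀ i, A i)) ⟶ Z, IsOpenImmersion j ∧
        DenseRange j ∧ j ≫ φ = Spec.map (CommRingCat.ofHom (algebraMap k (∀ i, A i))) := by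
  have : IsLocallyNoetherian Z := LocallyOfFiniteType.isLocallyNoetherian φ
  have : CompactSpace Z := QuasiCompact.compactSpace_of_compactSpace φ
  have : IsNoetherian Z := {}
  have hfin : (irreducibleComponents Z).Finite := finite_irreducibleComponents_of_isNoetherian
  have : Fintype (irreducibleComponents Z) := hfin.fintype
  choose A hA1 hA2 hA3 hft htr j hj hjT hjφ using fun T : irreducibleComponents Z =>
    comp_step n Z φ T.1 T.2 (hpure T.1 T.2)
  refine ⟨irreducibleComponents Z, inferInstance, A, hA1, hA2, hA3, hft, htr, ?_⟩
  have hdisj : Pairwise (Function.onFun Disjoint (fun i => Set.range (j i))) := by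
    intro a b hab
    by_contra hnd
    have hirr : ∀ a, IsIrreducible (Set.range (j a)) := fun a => by
      rw [← isIrreducible_iff_closure, hjT]; exact a.2.1
    obtain ⟨x, hxa, hxb⟩ := Set.not_disjoint_iff.mp hnd
    have key : ∀ a b, (Set.range (j a) ∩ Set.range (j b)).Nonempty → a.1 ⊆ b.1 := by
      intro a b h
      have := subset_closure_inter_of_isPreirreducible_of_isOpen (hirr a).2
        (j b).isOpenEmbedding.isOpen_range h
      rw [← hjT a, ← hjT b]
      exact closure_minimal (this.trans (closure_mono Set.inter_subset_right)) isClosed_closure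
    exact hab (Subtype.ext (Set.Subset.antisymm (key a b ⟨x, hxa, hxb⟩) (key b a ⟨x, hxb, hxa⟩)))
  have hs : IsOpenImmersion (Limits.Sigma.desc j) := isOpenImmersion_sigmaDesc _ j hdisj
  let e := sigmaSpec (fun i => CommRingCat.of (A i))
  have he : ∀ i, Spec.map (CommRingCat.ofHom (Pi.evalRingHom A i)) ≫ inv e = Limits.Sigma.ι (fun i => Spec (CommRingCat.of (A i))) i := by
    intro i
    rw [IsIso.comp_inv_eq]
    exact (ι_sigmaSpec (fun i => CommRingCat.of (A i)) i).symm
  have hei : ∀ i, Spec.map (CommRingCat.ofHom (Pi.evalRingHom A i)) ≫ inv e ≫ Limits.Sigma.desc j = j i := by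
    intro i
    rw [← Category.assoc, he, Limits.Sigma.ι_desc]
  refine ⟨inv e ≫ Limits.Sigma.desc j, inferInstance, ?_, ?_⟩
  · intro x
    obtain ⟨T, hT, hx⟩ : ∃ T ∈ irreducibleComponents Z, x ∈ T :=
      ⟨_, irreducibleComponent_mem_irreducibleComponents x, mem_irreducibleComponent⟩
    replace hx : x ∈ closure (Set.range (j ⟨T, hT⟩)) := by rw [hjT]; exact hx
    refine closure_mono ?_ hx
    rintro _ ⟨y, rfl⟩
    rw [← hei]
    exact ⟨_, rfl⟩
  · rw [Category.assoc, IsIso.inv_comp_eq]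
    refine Limits.Sigma.hom_ext _ _ fun i => ?_
    rw [← Category.assoc, Limits.Sigma.ι_desc, hjφ, ← Category.assoc]
    refine Eq.trans ?_ (congrArg (· ≫ _) (ι_sigmaSpec (fun i => CommRingCat.of (A i)) i).symm)
    change _ = Spec.map _ ≫ Spec.map _
    rw [← Spec.map_comp]
    rfl

open AlgebraicGeometry CategoryTheory in
theorem final_step {k : Type} [Field k] [PerfectField k] (n : ℕ) (Z : Scheme.{0}) [IsReduced Z]
    (φ : Z ⟶ Spec (CommRingCat.of k)) [LocallyOfFiniteType φ] [QuasiCompact φ]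
    (hpure : ∀ T ∈ irreducibleComponents Z, topologicalKrullDim T = (n : ℕ∞))
    (hnk : 0 < n ∨ Infinite k) :
    ∃ g : MvPolynomial (Fin (n + 1)) k,
      Smooth (Spec.map (CommRingCat.ofHom
        (algebraMap k (MvPolynomial (Fin (n + 1)) k ⧸ Ideal.span {g})))) ∧
      ∃ (U : Z.Opens) (V : (Spec (CommRingCat.of (MvPolynomial (Fin (n + 1)) k ⧸ Ideal.span {g}))).Opens)
        (e : U.toScheme ≅ V.toScheme),
      Dense (U : Set Z) ∧ Dense (V : Set (Spec (CommRingCat.of (MvPolynomial (Fin (n + 1)) k ⧸ Ideal.span {g})))) ∧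
      e.hom ≫ V.ι ≫ (Spec.map (CommRingCat.ofHom
          (algebraMap k (MvPolynomial (Fin (n + 1)) k ⧸ Ideal.span {g})))) = U.ι ≫ φ := by
  obtain ⟨ι, _, A, _, _, _, hft, htr, j, hj, hjd, hjφ⟩ := geom_step n Z φ hpure
  obtain ⟨g, hsm, θ, hθ, hθs⟩ := alg_main2 n hnk (fun i => FractionRing (A i)) htr
  have hfA : Algebra.FiniteType k (∀ i, A i) := by
    have h : LocallyOfFiniteType (Spec.map (CommRingCat.ofHom (algebraMap k (∀ i, A i)))) := by
      rw [← hjφ]; infer_instance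
    exact (RingHom.finiteType_algebraMap).mp ((HasRingHomProperty.Spec_iff (P := @LocallyOfFiniteType)).mp h)
  let f : (∀ i, A i) →ₐ[k] (∀ i, FractionRing (A i)) :=
    { toFun := fun a i => algebraMap (A i) (FractionRing (A i)) (a i)
      map_one' := by ext; simp
      map_mul' := fun a b => by ext; simp
      map_zero' := by ext; simp
      map_add' := fun a b => by ext; simp
      commutes' := fun r => by
        ext i
        simp only [Pi.algebraMap_apply]
        exact (IsScalarTower.algebraMap_apply k (A i) (FractionRing (A i)) r).symm }
  have hf : Function.Injective f := fun a b h => by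
    ext i
    exact IsFractionRing.injective (A i) (FractionRing (A i)) (congrFun h i)
  have hfs : ∀ q, ∃ a s, IsUnit (f s) ∧ q * f s = f a := by
    intro q
    choose a s hs h using fun i => IsFractionRing.div_surjective (A := A i) (q i)
    have hne : ∀ i, algebraMap (A i) (FractionRing (A i)) (s i) ≠ 0 := fun i =>
      (map_ne_zero_iff _ (IsFractionRing.injective (A i) _)).mpr (nonZeroDivisors.ne_zero (hs i))
    refine ⟨a, s, Pi.isUnit_iff.mpr fun i => (hne i).isUnit, ?_⟩
    ext i
    change q i * algebraMap _ _ (s i) = algebraMap _ _ (a i)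
    rw [← h i, div_mul_cancel₀ _ (hne i)]
  obtain ⟨C, u, v, hu, hv, hou, hov⟩ := spread f θ hf hθ hfs hθs
  refine ⟨g, ?_, ?_⟩
  · rw [HasRingHomProperty.Spec_iff (P := @Smooth)]
    exact RingHom.smooth_algebraMap.mpr hsm
  have hdense : ∀ {R S : Type} [CommRing R] [CommRing S] (w : R →+* S), Function.Injective w →
      DenseRange (Spec.map (CommRingCat.ofHom w)) := by
    intro R S _ _ w hw
    refine (PrimeSpectrum.denseRange_comap_iff_ker_le_nilRadical (f := w)).mpr ?_
    rw [(RingHom.injective_iff_ker_eq_bot w).mp hw]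
    exact bot_le
  let a := Spec.map (CommRingCat.ofHom u.toRingHom) ≫ j
  let b := Spec.map (CommRingCat.ofHom v.toRingHom)
  have ha : IsOpenImmersion a := inferInstance
  have hb : IsOpenImmersion b := hov
  have had : DenseRange a := by
    have := hjd.comp (hdense u.toRingHom hu) j.continuous
    exact this
  refine ⟨a.opensRange, b.opensRange, a.isoOpensRange.symm ≪≫ b.isoOpensRange, had, hdense _ hv, ?_⟩
  have hab : b ≫ Spec.map (CommRingCat.ofHom
      (algebraMap k (MvPolynomial (Fin (n + 1)) k ⧸ Ideal.span {g}))) = a ≫ φ := by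
    change Spec.map _ ≫ _ = (Spec.map _ ≫ j) ≫ φ
    rw [Category.assoc, hjφ, ← Spec.map_comp, ← Spec.map_comp, ← CommRingCat.ofHom_comp,
      ← CommRingCat.ofHom_comp]
    congr 2
    refine RingHom.ext fun x => ?_
    exact (v.commutes x).trans (u.commutes x).symm
  rw [Iso.trans_hom, Iso.symm_hom, Category.assoc, Iso.inv_comp_eq,
    Scheme.Hom.isoOpensRange_hom_ι_assoc, Scheme.Hom.isoOpensRange_hom_ι_assoc]
  exact hab

/-- **Theorem A.2** of the paper.  Let `k` be a perfect field and let `Z` be a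
geometrically reduced, separated algebraic variety over `k`, pure of dimension
`n`, where either `n > 0` or `k` is infinite.  Then there exists a polynomial
`g ∈ k[x₁, …, x_n, y]` such that the affine hypersurface `V : g = 0` in
`𝔸_k^{n+1}` is smooth over `k` and birational to `Z`. -/
theorem exists_smooth_birational_hypersurface
    (k : Type) [Field k] [PerfectField k] (n : ℕ)
    (Z : Scheme) (φ : Z ⟶ SpecOf k)
    [LocallyOfFiniteType φ] [QuasiCompact φ] [IsSeparated φ]
    (hgeomred : IsReduced (Limits.pullback φ
      (Spec.map (CommRingCat.ofHom (algebraMap k (AlgebraicClosure k))))))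
    (hpure : ∀ T ∈ irreducibleComponents (Z : Type),
      topologicalKrullDim T = (n : ℕ∞))
    (hnk : 0 < n ∨ Infinite k) :
    ∃ g : MvPolynomial (Fin (n + 1)) k,
      IsSmooth (Spec.map (CommRingCat.ofHom
        (algebraMap k (MvPolynomial (Fin (n + 1)) k ⧸ Ideal.span {g})))) ∧
      AreBirationalOver φ
        (Spec.map (CommRingCat.ofHom
          (algebraMap k (MvPolynomial (Fin (n + 1)) k ⧸ Ideal.span {g})))) := by
  have hred : IsReduced Z := red_step2 φ hgeomred
  exact final_step n Z φ hpure hnk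

end BakerModels
end
end
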